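/- arXiv:2010.12103 — 4 statements merged into one kernel-verified Lean document; each statement's English description precedes it below -/
import Mathlib

section
/- Let S = (s_1,…,s_m) be m i.i.d. samples from μ. For all 0 < ε ≤ σ²_F, Pr_S( σ²_F ≥ σ̂²_F(S) + ε ) ≤ exp( − ( m σ²_F / z² ) · h( − ε / σ²_F ) ) ≤ exp( − m ε² / ( 2 z² σ²_F ) ), where h(x) = (1+x)ln(1+x) − x. -/
/-!
The supremum over the class plays no role beyond monotonicity: the event
`V ≥ σ̂² + ε`, with `V` the wimpy variance, is contained for *each* member `f l` in
`{∑ f l (S k)² ≤ m (V - ε)}`. The Chernoff bound for a sum of i.i.d. variables in `[0, z²]`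
(`chernoff_single`), where `exp (L p) ≤ 1 + p (exp L - 1) ≤ exp (p (exp L - 1))` for `p ∈ [0, 1]`
controls the moment generating function (`mgf_single`), gives a bound continuous in
`E[(f l)²]`, so `E[(f l)²]` may be replaced by its supremum `V` (`chernoff_sup`).
Writing `u = exp L`, the optimal choice is `u = 1 - ε / V`; when `ε = V` this is the
limit `u → 0`. The second inequality is `h(-x) ≥ x² / 2` on `[0, 1]`, which reduces to
`sinh r ≤ r` for `r = log (1 - x) ≤ 0` (`half_sq_le_hfun_neg`).
-/

open MeasureTheory

noncomputable section

/-- Map a Boolean to a `±1` sign: `true ↦ 1`, `false ↦ -1`. -/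
def sgnB (x : Bool) : ℝ := if x then 1 else -1

/-- The `n`-Monte-Carlo Empirical Rademacher Average
`R̂ⁿ_m(F,S,σ) = (1/n) Σ_j sup_{f∈F} (1/m) Σ_i σ_{j,i} f(s_i)`. -/
def mcera {X ι : Type*} (f : ι → X → ℝ) (n m : ℕ) (S : Fin m → X)
    (σ : Fin n → Fin m → Bool) : ℝ :=
  (n : ℝ)⁻¹ * ∑ j : Fin n, ⨆ l : ι, (m : ℝ)⁻¹ * ∑ k : Fin m, sgnB (σ j k) * f l (S k)

/-- Uniform measure on `n × m` sign matrices: the entries are independent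
uniform Rademacher (±1) random variables. -/
def radMeasure (n m : ℕ) : Measure (Fin n → Fin m → Bool) :=
  (PMF.uniformOfFintype (Fin n → Fin m → Bool)).toMeasure

/-- The Empirical Rademacher Average `R̂(F,S) = E_σ[R̂ⁿ_m(F,S,σ)]`. -/
def era {X ι : Type*} (f : ι → X → ℝ) (n m : ℕ) (S : Fin m → X) : ℝ :=
  ∫ σ, mcera f n m S σ ∂(radMeasure n m)

/-- The Rademacher Complexity `R(F,m) = E_S[R̂(F,S)]`, `S` being `m` i.i.d. samples. -/
def rc {X ι : Type*} [MeasurableSpace X] (f : ι → X → ℝ) (n m : ℕ) (μ : Measure X) : ℝ :=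
  ∫ S : Fin m → X, era f n m S ∂(Measure.pi fun _ : Fin m => μ)

/-- `ẑ(S) = sup_{f∈F, 1≤i≤m} |f(s_i)|`. -/
def zhat {X ι : Type*} (f : ι → X → ℝ) {m : ℕ} (S : Fin m → X) : ℝ :=
  ⨆ p : ι × Fin m, |f p.1 (S p.2)|

/-- `ν̂_F(S) = (1/m) sup_{f∈F} Σ_i |f(s_i)|`. -/
def nuhat {X ι : Type*} (f : ι → X → ℝ) {m : ℕ} (S : Fin m → X) : ℝ :=
  (m : ℝ)⁻¹ * ⨆ l : ι, ∑ k : Fin m, |f l (S k)|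

/-- The empirical wimpy variance `σ̂²_F(S) = (1/m) sup_{f∈F} Σ_i f(s_i)²`. -/
def sigma2hat {X ι : Type*} (f : ι → X → ℝ) {m : ℕ} (S : Fin m → X) : ℝ :=
  (m : ℝ)⁻¹ * ⨆ l : ι, ∑ k : Fin m, (f l (S k)) ^ 2

/-- The wimpy variance `σ²_F = sup_{f∈F} E_μ[f²]`. -/
def wimpyVar {X ι : Type*} [MeasurableSpace X] (f : ι → X → ℝ) (μ : Measure X) : ℝ :=
  ⨆ l : ι, ∫ x, (f l x) ^ 2 ∂μ

/-- The positive supremum deviation `SD⁺(F,S) = sup_{f∈F} ((1/m)Σ_i f(s_i) - E_μ[f])`. -/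
def sdPlus {X ι : Type*} [MeasurableSpace X] (f : ι → X → ℝ) (μ : Measure X)
    {m : ℕ} (S : Fin m → X) : ℝ :=
  ⨆ l : ι, ((m : ℝ)⁻¹ * ∑ k : Fin m, f l (S k) - ∫ x, f l x ∂μ)

/-- The negative supremum deviation `SD⁻(F,S) = sup_{f∈F} (E_μ[f] - (1/m)Σ_i f(s_i))`. -/
def sdMinus {X ι : Type*} [MeasurableSpace X] (f : ι → X → ℝ) (μ : Measure X)
    {m : ℕ} (S : Fin m → X) : ℝ :=
  ⨆ l : ι, ((∫ x, f l x ∂μ) - (m : ℝ)⁻¹ * ∑ k : Fin m, f l (S k))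

/-- `η_F = sup_{f∈F} E_μ[f] - a`. -/
def etaF {X ι : Type*} [MeasurableSpace X] (f : ι → X → ℝ) (μ : Measure X) (a : ℝ) : ℝ :=
  (⨆ l : ι, ∫ x, f l x ∂μ) - a

/-- `γ_F = b - inf_{f∈F} E_μ[f]`. -/
def gammaF {X ι : Type*} [MeasurableSpace X] (f : ι → X → ℝ) (μ : Measure X) (b : ℝ) : ℝ :=
  b - ⨅ l : ι, ∫ x, f l x ∂μ

/-- `η̂_F(S) = sup_{f∈F} (1/m) Σ_i f(s_i) - a`. -/
def etahat {X ι : Type*} (f : ι → X → ℝ) {m : ℕ} (S : Fin m → X) (a : ℝ) : ℝ :=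
  (⨆ l : ι, (m : ℝ)⁻¹ * ∑ k : Fin m, f l (S k)) - a

/-- `γ̂_F(S) = b - sup_{f∈F} (1/m) Σ_i f(s_i)`. -/
def gammahat {X ι : Type*} (f : ι → X → ℝ) {m : ℕ} (S : Fin m → X) (b : ℝ) : ℝ :=
  b - ⨆ l : ι, (m : ℝ)⁻¹ * ∑ k : Fin m, f l (S k)

/-- `h(x) = (1+x) ln(1+x) - x`. -/
def hfun (x : ℝ) : ℝ := (1 + x) * Real.log (1 + x) - x

/-- `g(σ) = n m R̂ⁿ_m(F,S,σ) = Σ_j sup_{f∈F} Σ_i σ_{j,i} f(s_i)`. -/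
def gup {X ι : Type*} (f : ι → X → ℝ) {n m : ℕ} (S : Fin m → X)
    (σ : Fin n → Fin m → Bool) : ℝ :=
  ∑ j : Fin n, ⨆ l : ι, ∑ k : Fin m, sgnB (σ j k) * f l (S k)

/-- `g_{j,i}(σ)`: infimum over `σ'_{j,i} ∈ {-1,1}` of `g` evaluated at `σ` with its
`(j,i)` entry replaced by `σ'_{j,i}`. -/
def gji {X ι : Type*} (f : ι → X → ℝ) {n m : ℕ} (S : Fin m → X)
    (σ : Fin n → Fin m → Bool) (j : Fin n) (i : Fin m) : ℝ :=
  min (gup f S (Function.update σ j (Function.update (σ j) i true)))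
      (gup f S (Function.update σ j (Function.update (σ j) i false)))

/-- `g(S) = m SD⁺(F,S) = sup_{f∈F} (Σ_i f(s_i) - m E_μ[f])`. -/
def gSDp {X ι : Type*} [MeasurableSpace X] (f : ι → X → ℝ) (μ : Measure X)
    {m : ℕ} (S : Fin m → X) : ℝ :=
  ⨆ l : ι, (∑ k : Fin m, f l (S k) - m * ∫ x, f l x ∂μ)

/-- `g_i(S) = inf_{s'_i ∈ X} g(s_1,…,s_{i-1},s'_i,s_{i+1},…,s_m)` for `g = m SD⁺`. -/
def gSDpi {X ι : Type*} [MeasurableSpace X] (f : ι → X → ℝ) (μ : Measure X)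
    {m : ℕ} (S : Fin m → X) (i : Fin m) : ℝ :=
  ⨅ s' : X, gSDp f μ (Function.update S i s')

/-- `g(S) = m SD⁻(F,S) = sup_{f∈F} (m E_μ[f] - Σ_i f(s_i))`. -/
def gSDm {X ι : Type*} [MeasurableSpace X] (f : ι → X → ℝ) (μ : Measure X)
    {m : ℕ} (S : Fin m → X) : ℝ :=
  ⨆ l : ι, ((m : ℝ) * (∫ x, f l x ∂μ) - ∑ k : Fin m, f l (S k))

/-- `g_i(S) = inf_{s'_i ∈ X} g(s_1,…,s_{i-1},s'_i,s_{i+1},…,s_m)` for `g = m SD⁻`. -/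
def gSDmi {X ι : Type*} [MeasurableSpace X] (f : ι → X → ℝ) (μ : Measure X)
    {m : ℕ} (S : Fin m → X) (i : Fin m) : ℝ :=
  ⨅ s' : X, gSDm f μ (Function.update S i s')

/-- `g(S) = m σ̂²_F(S) = sup_{f∈F} Σ_i f(s_i)²`. -/
def gWv {X ι : Type*} (f : ι → X → ℝ) {m : ℕ} (S : Fin m → X) : ℝ :=
  ⨆ l : ι, ∑ k : Fin m, (f l (S k)) ^ 2

/-- `g_j(S) = sup_{f∈F} Σ_{i≠j} f(s_i)²`. -/
def gWvj {X ι : Type*} (f : ι → X → ℝ) {m : ℕ} (S : Fin m → X) (j : Fin m) : ℝ :=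
  ⨆ l : ι, ∑ k ∈ Finset.univ.erase j, (f l (S k)) ^ 2


/-- The graph of `exp` between `0` and `L` lies below its chord. -/
lemma exp_mul_le_chord (p L : ℝ) (hp0 : 0 ≤ p) (hp1 : p ≤ 1) :
    Real.exp (L * p) ≤ 1 + p * (Real.exp L - 1) := by
  have h := convexOn_exp.2 (Set.mem_univ (0 : ℝ)) (Set.mem_univ L)
    (sub_nonneg.2 hp1) hp0 (by ring)
  simp only [smul_eq_mul, mul_zero, zero_add, Real.exp_zero, mul_one] at h
  rw [mul_comm L p]
  linarith

lemma half_sq_le_hfun_neg (x : ℝ) (hx0 : 0 ≤ x) (hx1 : x ≤ 1) : x ^ 2 / 2 ≤ hfun (-x) := by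
  unfold hfun
  rcases hx1.eq_or_lt with rfl | hx
  · norm_num
  have hy : 0 < 1 + -x := by linarith
  have hlog : Real.log (1 + -x) ≤ 0 := Real.log_nonpos hy.le (by linarith)
  have h := Real.sinh_le_self_iff.2 hlog
  rw [Real.sinh_log hy] at h
  have h2 := mul_le_mul_of_nonneg_left h hy.le
  have h3 : (1 + -x) * (((1 + -x) - (1 + -x)⁻¹) / 2) = ((1 + -x) ^ 2 - 1) / 2 := by
    field_simp
  nlinarith

/-- Moment generating function of `q` with values in `[0, w]`, dominated by that of a Poisson
variable (scaled by `w`) with the same mean. -/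
lemma mgf_single {X : Type*} [MeasurableSpace X] (μ : Measure X) [IsProbabilityMeasure μ]
    (q : X → ℝ) (hq : Measurable q) (w : ℝ) (hw : 0 < w)
    (h0 : ∀ x, 0 ≤ q x) (h1 : ∀ x, q x ≤ w) (L : ℝ) :
    ∫ x, Real.exp (L / w * q x) ∂μ ≤ Real.exp ((∫ x, q x ∂μ) / w * (Real.exp L - 1)) := by
  have hqi : Integrable q μ := Integrable.of_bound hq.aestronglyMeasurable w
    (Filter.Eventually.of_forall fun x => by
      rw [Real.norm_eq_abs, abs_of_nonneg (h0 x)]; exact h1 x)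
  have hpt : ∀ x, Real.exp (L / w * q x) ≤ 1 + q x / w * (Real.exp L - 1) := fun x => by
    have := exp_mul_le_chord (q x / w) L (div_nonneg (h0 x) hw.le) ((div_le_one hw).2 (h1 x))
    rwa [show L / w * q x = L * (q x / w) by ring]
  have hri : Integrable (fun x => q x / w * (Real.exp L - 1)) μ := (hqi.div_const w).mul_const _
  calc ∫ x, Real.exp (L / w * q x) ∂μ
      ≤ ∫ x, (1 + q x / w * (Real.exp L - 1)) ∂μ :=
        integral_mono_of_nonneg (Filter.Eventually.of_forall fun x => (Real.exp_pos _).le)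
          ((integrable_const 1).add hri) (Filter.Eventually.of_forall hpt)
    _ = 1 + (∫ x, q x ∂μ) / w * (Real.exp L - 1) := by
        rw [integral_add (integrable_const 1) hri, integral_mul_const, integral_div]
        simp
    _ ≤ _ := by rw [add_comm]; exact Real.add_one_le_exp _

/-- Chernoff bound for the lower tail of a sum of `m` i.i.d. variables in `[0, w]`. -/
lemma chernoff_single {X : Type*} [MeasurableSpace X] (μ : Measure X) [IsProbabilityMeasure μ]
    (q : X → ℝ) (hq : Measurable q) (w : ℝ) (hw : 0 < w)
    (h0 : ∀ x, 0 ≤ q x) (h1 : ∀ x, q x ≤ w) (L : ℝ) (hL : L ≤ 0) (m : ℕ) (c : ℝ) :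
    (Measure.pi fun _ : Fin m => μ).real {S : Fin m → X | ∑ k, q (S k) ≤ m * c} ≤
      Real.exp (m / w * (-(c * L) + (∫ x, q x ∂μ) * (Real.exp L - 1))) := by
  have ht : L / w ≤ 0 := div_nonpos_of_nonpos_of_nonneg hL hw.le
  have hmeas : Measurable fun S : Fin m → X => ∑ k, q (S k) :=
    Finset.measurable_sum _ fun k _ => hq.comp (measurable_pi_apply k)
  have hint : Integrable (fun S : Fin m → X => Real.exp (L / w * ∑ k, q (S k)))
      (Measure.pi fun _ : Fin m => μ) := by
    refine Integrable.of_bound (hmeas.const_mul _).exp.aestronglyMeasurable 1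
      (Filter.Eventually.of_forall fun S => ?_)
    rw [Real.norm_eq_abs, Real.abs_exp, Real.exp_le_one_iff]
    exact mul_nonpos_of_nonpos_of_nonneg ht (Finset.sum_nonneg fun k _ => h0 _)
  have hC := ProbabilityTheory.measure_le_le_exp_mul_mgf (m * c) ht hint
  refine hC.trans ?_
  have hmgf : ProbabilityTheory.mgf (fun S : Fin m → X => ∑ k, q (S k))
      (Measure.pi fun _ : Fin m => μ) (L / w) = (∫ x, Real.exp (L / w * q x) ∂μ) ^ m := by
    unfold ProbabilityTheory.mgf
    simp_rw [Finset.mul_sum, Real.exp_sum]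
    rw [integral_fintype_prod_eq_prod (fun _ : Fin m => fun x => Real.exp (L / w * q x))]
    simp
  rw [hmgf]
  have hpow : (∫ x, Real.exp (L / w * q x) ∂μ) ^ m ≤
      Real.exp ((∫ x, q x ∂μ) / w * (Real.exp L - 1)) ^ m :=
    pow_le_pow_left₀ (integral_nonneg fun x => (Real.exp_pos _).le)
      (mgf_single μ q hq w hw h0 h1 L) m
  refine (mul_le_mul_of_nonneg_left hpow (Real.exp_pos _).le).trans (le_of_eq ?_)
  rw [← Real.exp_nat_mul, ← Real.exp_add]
  congr 1
  ring

/-- The Chernoff bound for the class, with free parameter `L = log u ≤ 0`. It holds with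
`E[(f l)²]` in the exponent for every `l`, hence with the supremum by continuity. -/
lemma chernoff_sup {X : Type*} [MeasurableSpace X] {ι : Type*} [Nonempty ι]
    (f : ι → X → ℝ) (z : ℝ) (hz : 0 < z)
    (hmeas : ∀ l : ι, Measurable (f l)) (hrange : ∀ (l : ι) (x : X), |f l x| ≤ z)
    (μ : Measure X) [IsProbabilityMeasure μ] (m : ℕ) (hm : 0 < m) (ε L : ℝ) (hL : L ≤ 0) :
    (Measure.pi fun _ : Fin m => μ).real
        {S : Fin m → X | wimpyVar f μ ≥ sigma2hat f S + ε} ≤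
      Real.exp (m / z ^ 2 *
        (-((wimpyVar f μ - ε) * L) + wimpyVar f μ * (Real.exp L - 1))) := by
  have hm' : (0 : ℝ) < m := Nat.cast_pos.2 hm
  have hsq : ∀ l x, f l x ^ 2 ≤ z ^ 2 := fun l x => sq_le_sq.2 (by
    rw [abs_of_pos hz]; exact hrange l x)
  have hsub : ∀ l, {S : Fin m → X | wimpyVar f μ ≥ sigma2hat f S + ε} ⊆
      {S : Fin m → X | ∑ k, f l (S k) ^ 2 ≤ m * (wimpyVar f μ - ε)} := by
    intro l S hS
    simp only [Set.mem_ofPred_eq, sigma2hat, ge_iff_le] at hS ⊢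
    have hbdd : BddAbove (Set.range fun l => ∑ k : Fin m, f l (S k) ^ 2) := by
      refine ⟨∑ _k : Fin m, z ^ 2, ?_⟩
      rintro _ ⟨l, rfl⟩
      exact Finset.sum_le_sum fun k _ => hsq l _
    have h1 := le_ciSup hbdd l
    have h2 : (m : ℝ)⁻¹ * (⨆ l : ι, ∑ k : Fin m, f l (S k) ^ 2) ≤ wimpyVar f μ - ε := by
      linarith
    rw [inv_mul_le_iff₀ hm'] at h2
    exact h1.trans h2
  have hvbdd : BddAbove (Set.range fun l => ∫ x, f l x ^ 2 ∂μ) := by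
    refine ⟨z ^ 2, ?_⟩
    rintro _ ⟨l, rfl⟩
    have := integral_mono_of_nonneg (μ := μ)
      (Filter.Eventually.of_forall fun x => sq_nonneg (f l x)) (integrable_const (z ^ 2))
      (Filter.Eventually.of_forall (hsq l))
    simpa using this
  -- A closed condition on `v` holding on the range of `E[(f l)²]` also holds at its supremum.
  have hclosed : IsClosed {v : ℝ | (Measure.pi fun _ : Fin m => μ).real
        {S : Fin m → X | wimpyVar f μ ≥ sigma2hat f S + ε} ≤
      Real.exp (m / z ^ 2 * (-((wimpyVar f μ - ε) * L) + v * (Real.exp L - 1)))} :=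
    isClosed_le continuous_const (by fun_prop)
  have hrng : (Set.range fun l => ∫ x, f l x ^ 2 ∂μ) ⊆
      {v : ℝ | (Measure.pi fun _ : Fin m => μ).real
        {S : Fin m → X | wimpyVar f μ ≥ sigma2hat f S + ε} ≤
      Real.exp (m / z ^ 2 * (-((wimpyVar f μ - ε) * L) + v * (Real.exp L - 1)))} := by
    rintro _ ⟨l, rfl⟩
    exact (measureReal_mono (hsub l)).trans
      (chernoff_single μ (fun x => f l x ^ 2) ((hmeas l).pow_const 2) (z ^ 2) (by positivity)
        (fun x => sq_nonneg _) (hsq l) L hL m _)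
  exact hclosed.closure_subset_iff.2 hrng (csSup_mem_closure (Set.range_nonempty _) hvbdd)

theorem stmt_11 {X : Type*} [MeasurableSpace X] {ι : Type*} [Countable ι]
    (f : ι → X → ℝ) (a b : ℝ) (ha : a ≤ 0) (hb : 0 < b)
    (hmeas : ∀ l : ι, Measurable (f l))
    (hrange : ∀ (l : ι) (x : X), f l x ∈ Set.Icc a b)
    (hzero : ∃ l₀ : ι, ∀ x : X, f l₀ x = 0)
    (μ : Measure X) [IsProbabilityMeasure μ] (m : ℕ) (hm : 0 < m)
    (ε : ℝ) (hε0 : 0 < ε) (hε : ε ≤ wimpyVar f μ) :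
    ((Measure.pi fun _ : Fin m => μ)
        {S : Fin m → X | wimpyVar f μ ≥ sigma2hat f S + ε}).toReal ≤
      Real.exp (-((m : ℝ) * wimpyVar f μ / (max |a| |b|) ^ 2) *
        hfun (-ε / wimpyVar f μ)) ∧
    Real.exp (-((m : ℝ) * wimpyVar f μ / (max |a| |b|) ^ 2) *
        hfun (-ε / wimpyVar f μ)) ≤
      Real.exp (-((m : ℝ) * ε ^ 2) / (2 * (max |a| |b|) ^ 2 * wimpyVar f μ)) := by
  obtain ⟨l₀, -⟩ := hzero
  have : Nonempty ι := ⟨l₀⟩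
  set z := max |a| |b| with hzdef
  have hz : 0 < z := lt_of_lt_of_le (abs_pos.2 hb.ne') (le_max_right _ _)
  have hrange' : ∀ (l : ι) (x : X), |f l x| ≤ z := fun l x =>
    abs_le_max_abs_abs (hrange l x).1 (hrange l x).2
  have hC := chernoff_sup f z hz hmeas hrange' μ m hm ε
  set V := wimpyVar f μ with hVdef
  have hV : 0 < V := hε0.trans_le hε
  constructor
  · change (Measure.pi fun _ : Fin m => μ).real _ ≤ _
    rcases hε.eq_or_lt with rfl | hlt
    -- If `ε = V`, then `h(-1) = 1` and the optimal exponent is approached as `L → -∞`.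
    · have hlim : Filter.Tendsto (fun L : ℝ => Real.exp (m / z ^ 2 *
          (-((V - V) * L) + V * (Real.exp L - 1)))) Filter.atBot
          (nhds (Real.exp (m / z ^ 2 * (V * (0 - 1))))) := by
        simp only [sub_self, zero_mul, neg_zero, zero_add]
        exact (Real.continuous_exp.tendsto _).comp
          (((Real.tendsto_exp_atBot.sub_const 1).const_mul V).const_mul _)
      have hle := ge_of_tendsto hlim
        ((Filter.eventually_le_atBot (0 : ℝ)).mono fun L hL => hC L hL)
      refine hle.trans (le_of_eq ?_)
      rw [neg_div, div_self hV.ne']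
      simp only [hfun]
      norm_num
      ring
    · have hu : 0 < 1 + -ε / V := by
        rw [neg_div]
        linarith [(div_lt_one hV).2 hlt]
      have hu1 : 1 + -ε / V ≤ 1 := by
        rw [neg_div]
        linarith [div_pos hε0 hV]
      refine (hC (Real.log (1 + -ε / V)) (Real.log_nonpos hu.le hu1)).trans (le_of_eq ?_)
      rw [Real.exp_log hu]
      congr 1
      unfold hfun
      have hVε : V - ε = V * (1 + -ε / V) := by
        field_simp
        ring
      rw [hVε]
      ring
  · rw [Real.exp_le_exp]
    have hx := half_sq_le_hfun_neg (ε / V) (div_pos hε0 hV).le ((div_le_one hV).2 hε)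
    have hK : 0 ≤ (m : ℝ) * V / z ^ 2 := by positivity
    have h := mul_le_mul_of_nonneg_left hx hK
    have heq : -((m : ℝ) * ε ^ 2) / (2 * z ^ 2 * V) = -(m * V / z ^ 2 * ((ε / V) ^ 2 / 2)) := by
      field_simp
    rw [heq, neg_div, neg_mul]
    exact neg_le_neg h
end
end

section
/- Let S = (s_1,…,s_m) be m i.i.d. samples from μ and let δ ∈ (0,1). With probability at least 1 − δ over S, σ²_F ≤ σ̂²_F(S) + z² ln(1/δ)/m + sqrt( ( z² ln(1/δ)/m )² + 2 z² σ̂²_F(S) ln(1/δ)/m ). -/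
/-!
No concentration inequality for suprema is needed: the bound only concerns the lower tail of the
empirical wimpy variance, which dominates the empirical second moment of each single member of the
class. Put `z = max |a| |b|`, `V = σ²_F`, `G = m σ̂²_F = sup_l ∑ f_l(s_k)²` and `L = ln (1/δ)`.

From `exp (-x) ≤ 1 - x + x²/2` for `x ≥ 0` and `f_l⁴ ≤ z² f_l²`, independence gives, for every `l`
and `t ≥ 0`, `E exp (-t G) ≤ E exp (-t ∑ f_l²) ≤ exp (-t m E f_l² + t² m z² V / 2)`
(`mgf_gWv_le_aux`). The left-hand side does not depend on `l`, so `E f_l²` may be replaced by its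
supremum `V` (`mgf_gWv_le`). Chernoff's bound then shows that `σ̂²_F ≤ V - sqrt (2 z² V L / m)` has
probability at most `δ`, and solving this quadratic inequality for `V`
(`le_sub_sqrt_of_lt`) gives the claim.
-/

open MeasureTheory

noncomputable section

lemma exp_neg_le_quadratic {x : ℝ} (hx : 0 ≤ x) : Real.exp (-x) ≤ 1 - x + x ^ 2 / 2 := by
  have h := Real.quadratic_le_exp_of_nonneg hx
  have hpos : 0 ≤ 1 - x + x ^ 2 / 2 := by nlinarith [sq_nonneg (x - 1)]
  rw [Real.exp_neg, inv_le_iff_one_le_mul₀ (Real.exp_pos x)]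
  -- `(1 - x + x²/2) (1 + x + x²/2) = 1 + x⁴/4`
  calc (1 : ℝ) ≤ (1 - x + x ^ 2 / 2) * (1 + x + x ^ 2 / 2) := by nlinarith [sq_nonneg (x ^ 2)]
    _ ≤ (1 - x + x ^ 2 / 2) * Real.exp x := mul_le_mul_of_nonneg_left h hpos

/-- Inversion of the quadratic inequality: if `V` exceeds the empirical bound built from `Y`, then
`Y` lies at least `sqrt (2 A V)` below `V`. -/
lemma le_sub_sqrt_of_lt {A V Y : ℝ} (hA : 0 ≤ A)
    (h : Y + A + √(A ^ 2 + 2 * A * Y) < V) : Y ≤ V - √(2 * A * V) := by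
  have hs : √(A ^ 2 + 2 * A * Y) < V - Y - A := by linarith
  have h0 : 0 ≤ √(A ^ 2 + 2 * A * Y) := Real.sqrt_nonneg _
  have h1 : A ^ 2 + 2 * A * Y < (V - Y - A) ^ 2 := (Real.sqrt_lt' (by linarith)).1 hs
  have h2 : √(2 * A * V) ≤ V - Y := Real.sqrt_le_iff.2 ⟨by linarith, by nlinarith⟩
  linarith

lemma bddAbove_sum_sq {X ι : Type*} {f : ι → X → ℝ} {z : ℝ} (hz : ∀ l x, f l x ^ 2 ≤ z ^ 2) {m : ℕ}
    (S : Fin m → X) : BddAbove (Set.range fun l => ∑ k : Fin m, f l (S k) ^ 2) :=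
  ⟨∑ _k : Fin m, z ^ 2, by
    rintro _ ⟨l, rfl⟩
    exact Finset.sum_le_sum fun k _ => hz l (S k)⟩

lemma gWv_nonneg {X ι : Type*} (f : ι → X → ℝ) {m : ℕ} (S : Fin m → X) : 0 ≤ gWv f S :=
  Real.iSup_nonneg fun _ => Finset.sum_nonneg fun _ _ => sq_nonneg _

section

variable {X : Type*} [MeasurableSpace X] {ι : Type*}

/-- Laplace transform of a variable with values in `[0, c]`; the variance proxy is `c E g`. -/
lemma integral_exp_neg_le (μ : Measure X) [IsProbabilityMeasure μ] {g : X → ℝ}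
    (hg : Measurable g) {c : ℝ} (h0 : ∀ x, 0 ≤ g x) (hc : ∀ x, g x ≤ c) {t : ℝ} (ht : 0 ≤ t) :
    ∫ x, Real.exp (-t * g x) ∂μ ≤
      Real.exp (-t * (∫ x, g x ∂μ) + t ^ 2 * c * (∫ x, g x ∂μ) / 2) := by
  have hint : Integrable g μ :=
    Integrable.of_bound hg.aestronglyMeasurable c
      (Filter.Eventually.of_forall fun x => by rw [Real.norm_of_nonneg (h0 x)]; exact hc x)
  have hexp : Integrable (fun x => Real.exp (-t * g x)) μ :=
    Integrable.of_bound (by fun_prop) 1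
      (Filter.Eventually.of_forall fun x => by
        rw [Real.norm_of_nonneg (Real.exp_pos _).le]
        exact Real.exp_le_one_iff.2 (by nlinarith [mul_nonneg ht (h0 x)]))
  calc ∫ x, Real.exp (-t * g x) ∂μ
      ≤ ∫ x, (1 + (-t + t ^ 2 * c / 2) * g x) ∂μ := by
        refine integral_mono hexp ((integrable_const _).add (hint.const_mul _)) fun x => ?_
        have h1 := exp_neg_le_quadratic (mul_nonneg ht (h0 x))
        have h2 : g x * g x ≤ c * g x := mul_le_mul_of_nonneg_right (hc x) (h0 x)
        have h3 := mul_le_mul_of_nonneg_left h2 (sq_nonneg t)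
        rw [← neg_mul] at h1
        dsimp only
        nlinarith
    _ = (-t * (∫ x, g x ∂μ) + t ^ 2 * c * (∫ x, g x ∂μ) / 2) + 1 := by
        rw [integral_add (integrable_const _) (hint.const_mul _), integral_const_mul]
        simp
        ring
    _ ≤ _ := Real.add_one_le_exp _

lemma integral_sq_le {f : ι → X → ℝ} {z : ℝ} (hz : ∀ l x, f l x ^ 2 ≤ z ^ 2)
    (μ : Measure X) [IsProbabilityMeasure μ] (l : ι) : ∫ x, f l x ^ 2 ∂μ ≤ z ^ 2 := by
  have h := integral_mono_of_nonneg (μ := μ) (Filter.Eventually.of_forall fun x => sq_nonneg (f l x))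
    (integrable_const (z ^ 2)) (Filter.Eventually.of_forall fun x => hz l x)
  simpa using h

lemma integral_sq_le_wimpyVar {f : ι → X → ℝ} {z : ℝ} (hz : ∀ l x, f l x ^ 2 ≤ z ^ 2)
    (μ : Measure X) [IsProbabilityMeasure μ] (l : ι) : ∫ x, f l x ^ 2 ∂μ ≤ wimpyVar f μ :=
  le_ciSup (f := fun l => ∫ x, f l x ^ 2 ∂μ)
    ⟨z ^ 2, by rintro _ ⟨l, rfl⟩; exact integral_sq_le hz μ l⟩ l

lemma integrable_exp_gWv [Countable ι] {f : ι → X → ℝ} (hmeas : ∀ l, Measurable (f l))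
    (μ : Measure X) [IsProbabilityMeasure μ] (m : ℕ) {t : ℝ} (ht : 0 ≤ t) :
    Integrable (fun S : Fin m → X => Real.exp (-t * gWv f S)) (Measure.pi fun _ => μ) := by
  have hG : Measurable fun S : Fin m → X => gWv f S := by
    unfold gWv
    exact Measurable.iSup fun l => by fun_prop
  refine Integrable.of_bound (by fun_prop) 1 (Filter.Eventually.of_forall fun S => ?_)
  rw [Real.norm_of_nonneg (Real.exp_pos _).le]
  exact Real.exp_le_one_iff.2 (by nlinarith [mul_nonneg ht (gWv_nonneg f S)])

/-- The Laplace transform of the supremum is controlled by any single member `l` of the class. -/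
lemma mgf_gWv_le_aux [Countable ι] {f : ι → X → ℝ} (hmeas : ∀ l, Measurable (f l)) {z : ℝ}
    (hz : ∀ l x, f l x ^ 2 ≤ z ^ 2) (μ : Measure X) [IsProbabilityMeasure μ] (m : ℕ)
    {t : ℝ} (ht : 0 ≤ t) (l : ι) :
    ProbabilityTheory.mgf (fun S : Fin m → X => gWv f S) (Measure.pi fun _ => μ) (-t) ≤
      Real.exp (-t * m * (∫ x, f l x ^ 2 ∂μ) + t ^ 2 * m * z ^ 2 * wimpyVar f μ / 2) := by
  have hprod : ∀ S : Fin m → X, Real.exp (-t * ∑ k, f l (S k) ^ 2) =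
      ∏ k, Real.exp (-t * f l (S k) ^ 2) := fun S => by
    rw [Finset.mul_sum, Real.exp_sum]
  calc ProbabilityTheory.mgf (fun S : Fin m → X => gWv f S) (Measure.pi fun _ => μ) (-t)
      ≤ ∫ S : Fin m → X, Real.exp (-t * ∑ k, f l (S k) ^ 2) ∂(Measure.pi fun _ => μ) := by
        refine integral_mono (integrable_exp_gWv hmeas μ m ht) ?_ fun S => ?_
        · have hm : Measurable fun S : Fin m → X => Real.exp (-t * ∑ k, f l (S k) ^ 2) := by
            fun_prop
          refine Integrable.of_bound hm.aestronglyMeasurable 1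
            (Filter.Eventually.of_forall fun S => ?_)
          have h0 : 0 ≤ ∑ k, f l (S k) ^ 2 := Finset.sum_nonneg fun _ _ => sq_nonneg _
          rw [Real.norm_of_nonneg (Real.exp_pos _).le]
          exact Real.exp_le_one_iff.2 (by nlinarith [mul_nonneg ht h0])
        · have h : ∑ k, f l (S k) ^ 2 ≤ gWv f S := le_ciSup (bddAbove_sum_sq hz S) l
          exact Real.exp_le_exp.2 (by nlinarith [mul_le_mul_of_nonneg_left h ht])
    _ = (∫ x, Real.exp (-t * f l x ^ 2) ∂μ) ^ m := by
        simp_rw [hprod]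
        rw [integral_fintype_prod_eq_prod (fun _ x => Real.exp (-t * f l x ^ 2))]
        simp
    _ ≤ (Real.exp (-t * (∫ x, f l x ^ 2 ∂μ) + t ^ 2 * z ^ 2 * (∫ x, f l x ^ 2 ∂μ) / 2)) ^ m := by
        refine pow_le_pow_left₀ (integral_nonneg fun x => (Real.exp_pos _).le) ?_ m
        exact integral_exp_neg_le μ ((hmeas l).pow_const 2) (fun x => sq_nonneg _) (hz l) ht
    _ ≤ _ := by
        rw [← Real.exp_nat_mul]
        refine Real.exp_le_exp.2 ?_
        have h := mul_le_mul_of_nonneg_left (integral_sq_le_wimpyVar hz μ l)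
          (by positivity : 0 ≤ t ^ 2 * m * z ^ 2)
        linarith

lemma mgf_gWv_le [Countable ι] [Nonempty ι] {f : ι → X → ℝ} (hmeas : ∀ l, Measurable (f l))
    {z : ℝ} (hz : ∀ l x, f l x ^ 2 ≤ z ^ 2) (μ : Measure X) [IsProbabilityMeasure μ] {m : ℕ}
    (hm : 0 < m) {t : ℝ} (ht : 0 < t) :
    ProbabilityTheory.mgf (fun S : Fin m → X => gWv f S) (Measure.pi fun _ => μ) (-t) ≤
      Real.exp (-t * m * wimpyVar f μ + t ^ 2 * m * z ^ 2 * wimpyVar f μ / 2) := by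
  have hpos : 0 < ProbabilityTheory.mgf (fun S : Fin m → X => gWv f S)
      (Measure.pi fun _ => μ) (-t) :=
    ProbabilityTheory.mgf_pos (integrable_exp_gWv hmeas μ m ht.le)
  have htm : 0 < t * m := by positivity
  set M := ProbabilityTheory.mgf (fun S : Fin m → X => gWv f S) (Measure.pi fun _ => μ) (-t)
  set K := t ^ 2 * m * z ^ 2 * wimpyVar f μ / 2
  have hV : wimpyVar f μ ≤ (K - Real.log M) / (t * m) := by
    refine ciSup_le fun l => ?_
    have h := (Real.log_le_iff_le_exp hpos).2 (mgf_gWv_le_aux hmeas hz μ m ht.le l)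
    change _ ≤ _ + K at h
    rw [le_div_iff₀ htm]
    linarith
  rw [le_div_iff₀ htm] at hV
  exact (Real.log_le_iff_le_exp hpos).1 (by linarith)

/-- Chernoff's bound for the lower tail, with `A = z² L / m`. -/
lemma measureReal_gWv_le [Countable ι] [Nonempty ι] {f : ι → X → ℝ}
    (hmeas : ∀ l, Measurable (f l)) {z : ℝ} (hz0 : 0 < z) (hz : ∀ l x, f l x ^ 2 ≤ z ^ 2)
    (μ : Measure X) [IsProbabilityMeasure μ] {m : ℕ} (hm : 0 < m) (hV : 0 < wimpyVar f μ)
    {L : ℝ} (hL : 0 < L) :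
    (Measure.pi fun _ : Fin m => μ).real
      {S | gWv f S ≤ m * (wimpyVar f μ - √(2 * (z ^ 2 * L / m) * wimpyVar f μ))} ≤
      Real.exp (-L) := by
  have hm' : (0 : ℝ) < m := by exact_mod_cast hm
  set V := wimpyVar f μ
  set r := √(2 * (z ^ 2 * L / m) * V)
  have hr : 0 < r := Real.sqrt_pos.2 (by positivity)
  have hr2 : r ^ 2 = 2 * (z ^ 2 * L / m) * V := Real.sq_sqrt (by positivity)
  -- the minimiser of the exponent `-t m r + t² m z² V / 2`
  have ht : 0 < r / (z ^ 2 * V) := by positivity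
  set t := r / (z ^ 2 * V) with ht_def
  have h1 := ProbabilityTheory.measure_le_le_exp_mul_mgf (m * (V - r)) (neg_nonpos.2 ht.le)
    (integrable_exp_gWv hmeas μ m ht.le)
  refine h1.trans ((mul_le_mul_of_nonneg_left (mgf_gWv_le hmeas hz μ hm ht)
    (Real.exp_pos _).le).trans (le_of_eq ?_))
  rw [← Real.exp_add]
  congr 1
  have h2 : t * m * r = 2 * L := by
    calc t * m * r = m * r ^ 2 / (z ^ 2 * V) := by rw [ht_def]; ring
      _ = 2 * L := by rw [hr2]; field_simp
  have h3 : t ^ 2 * m * z ^ 2 * V = 2 * L := by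
    rw [← h2, ht_def]; field_simp
  linarith

end

theorem stmt_12 {X : Type*} [MeasurableSpace X] {ι : Type*} [Countable ι]
    (f : ι → X → ℝ) (a b : ℝ) (ha : a ≤ 0) (hb : 0 < b)
    (hmeas : ∀ l : ι, Measurable (f l))
    (hrange : ∀ (l : ι) (x : X), f l x ∈ Set.Icc a b)
    (hzero : ∃ l₀ : ι, ∀ x : X, f l₀ x = 0)
    (μ : Measure X) [IsProbabilityMeasure μ] (m : ℕ) (hm : 0 < m)
    (δ : ℝ) (hδ : δ ∈ Set.Ioo (0 : ℝ) 1) :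
    1 - δ ≤ ((Measure.pi fun _ : Fin m => μ)
        {S : Fin m → X | wimpyVar f μ ≤ sigma2hat f S +
          (max |a| |b|) ^ 2 * Real.log (1 / δ) / m +
          Real.sqrt (((max |a| |b|) ^ 2 * Real.log (1 / δ) / m) ^ 2 +
            2 * (max |a| |b|) ^ 2 * sigma2hat f S * Real.log (1 / δ) / m)}).toReal := by
  obtain ⟨l₀, -⟩ := hzero
  have : Nonempty ι := ⟨l₀⟩
  have hz0 : 0 < max |a| |b| := lt_max_of_lt_right (abs_pos.2 hb.ne')
  have hz : ∀ l x, f l x ^ 2 ≤ (max |a| |b|) ^ 2 := fun l x => by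
    refine sq_le_sq' ?_ ?_
    · linarith [(hrange l x).1, neg_abs_le a, le_max_left |a| |b|]
    · linarith [(hrange l x).2, le_abs_self b, le_max_right |a| |b|]
  set z := max |a| |b|
  have hm' : (0 : ℝ) < m := by exact_mod_cast hm
  have hL : 0 < Real.log (1 / δ) := Real.log_pos (one_lt_one_div hδ.1 hδ.2)
  set L := Real.log (1 / δ) with hL_def
  have hδL : Real.exp (-L) = δ := by
    rw [hL_def, one_div, Real.log_inv, neg_neg, Real.exp_log hδ.1]
  have hA : 0 < z ^ 2 * L / m := by positivity
  have hYG : ∀ S : Fin m → X, sigma2hat f S = (m : ℝ)⁻¹ * gWv f S := fun S => rfl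
  have hY : ∀ S : Fin m → X, 0 ≤ sigma2hat f S := fun S => by
    rw [hYG]; exact mul_nonneg (by positivity) (gWv_nonneg f S)
  set good := {S : Fin m → X | wimpyVar f μ ≤ sigma2hat f S + z ^ 2 * L / m +
    √((z ^ 2 * L / m) ^ 2 + 2 * z ^ 2 * sigma2hat f S * L / m)}
  change 1 - δ ≤ (Measure.pi fun _ : Fin m => μ).real good
  have hbad : (Measure.pi fun _ : Fin m => μ).real goodᶜ ≤ δ := by
    rcases le_or_gt (wimpyVar f μ) 0 with hV | hV
    · have : goodᶜ = ∅ := by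
        rw [Set.compl_empty_iff, Set.eq_univ_iff_forall]
        intro S
        have := hY S
        exact hV.trans (by positivity)
      rw [this, measureReal_empty]
      exact hδ.1.le
    · refine (measureReal_mono ?_).trans
        ((measureReal_gWv_le hmeas hz0 hz μ hm hV hL).trans hδL.le)
      intro S hS
      have hS' : sigma2hat f S + z ^ 2 * L / m +
          √((z ^ 2 * L / m) ^ 2 + 2 * (z ^ 2 * L / m) * sigma2hat f S) < wimpyVar f μ := by
        have h := lt_of_not_ge (Set.notMem_ofPred_iff.1 hS)
        have he : 2 * z ^ 2 * sigma2hat f S * L / m = 2 * (z ^ 2 * L / m) * sigma2hat f S := by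
          ring
        rwa [he] at h
      have h := le_sub_sqrt_of_lt hA.le hS'
      rwa [hYG, inv_mul_le_iff₀ hm'] at h
  -- subadditivity suffices, so the measurability of the event plays no role
  have hunion := measureReal_union_le (μ := Measure.pi fun _ : Fin m => μ) good goodᶜ
  rw [Set.union_compl_self, probReal_univ] at hunion
  linarith
end
end

section
/- Assume c = b − a ≤ 1. Define g : X^m → ℝ by g(S) = m·SD⁺(F,S) = sup_{f∈F} { Σ_{i=1}^m f(s_i) − m E_μ[f] }, and for each i define g_i(S) = inf_{s'_i ∈ X} sup_{f∈F} { Σ_{j≠i} f(s_j) + f(s'_i) − m E_μ[f] }. Then for every S ∈ X^m and every i: 0 ≤ g(S) − g_i(S) ≤ 1, and Σ_{i=1}^m ( g(S) − g_i(S) ) ≤ g(S) + m η_F. That is, g is a (1, m η_F)-self-bounding function. -/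
/-!
Each `Σ f(s_k) - m E f` is bounded by `m (b - a)`, so all suprema below are genuine, and the zero
function gives `g ≥ 0`, so the infima `g_i` are genuine too. Replacing the `i`-th sample point by
`s'` changes the objective at a fixed `f` by `f(s') - f(s_i) ≥ a - f(s_i) ≥ -(b - a) ≥ -1`
(`deviation_update_le`), which yields `g - g_i ≤ 1`. If `f` is `ε`-optimal for `g(S)`, the same
inequality gives `g - g_i ≤ ε + f(s_i) - a`. Summing over `i`, the right-hand side is
`m ε + (Σ f(s_i) - m E f) + m (E f - a) ≤ m ε + g + m η_F`, and `ε` is arbitrary.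
-/

open MeasureTheory

noncomputable section

theorem integral_mem_Icc_of_range {X : Type*} [MeasurableSpace X] {h : X → ℝ} {a b : ℝ}
    (hm : Measurable h) (hr : ∀ x, h x ∈ Set.Icc a b) (μ : Measure X) [IsProbabilityMeasure μ] :
    ∫ x, h x ∂μ ∈ Set.Icc a b := by
  have hi : Integrable h μ :=
    Integrable.of_mem_Icc a b hm.aemeasurable (Filter.Eventually.of_forall hr)
  constructor
  · have := integral_mono (μ := μ) (integrable_const a) hi (fun x => (hr x).1)
    simpa using this
  · have := integral_mono (μ := μ) hi (integrable_const b) (fun x => (hr x).2)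
    simpa using this

theorem bddAbove_deviation {X : Type*} [MeasurableSpace X] {ι : Type*} {f : ι → X → ℝ} {a b : ℝ}
    (hmeas : ∀ l : ι, Measurable (f l)) (hrange : ∀ (l : ι) (x : X), f l x ∈ Set.Icc a b)
    (μ : Measure X) [IsProbabilityMeasure μ] {m : ℕ} (S : Fin m → X) :
    BddAbove (Set.range fun l : ι => ∑ k : Fin m, f l (S k) - m * ∫ x, f l x ∂μ) := by
  refine ⟨m * b - m * a, ?_⟩
  rintro _ ⟨l, rfl⟩
  have h1 : ∑ k : Fin m, f l (S k) ≤ m * b := by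
    simpa using Finset.sum_le_sum (s := Finset.univ) fun k _ => (hrange l (S k)).2
  have h2 : (m : ℝ) * a ≤ m * ∫ x, f l x ∂μ :=
    mul_le_mul_of_nonneg_left (integral_mem_Icc_of_range (hmeas l) (hrange l) μ).1 m.cast_nonneg
  dsimp only
  linarith

/-- The objective at a fixed `f`, minus the largest possible loss `f(s_i) - a` caused by replacing
`s_i`, is a lower bound for `g` at the modified sample. -/
theorem deviation_update_le {X : Type*} [MeasurableSpace X] {ι : Type*} {f : ι → X → ℝ} {a b : ℝ}
    (hmeas : ∀ l : ι, Measurable (f l)) (hrange : ∀ (l : ι) (x : X), f l x ∈ Set.Icc a b)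
    (μ : Measure X) [IsProbabilityMeasure μ] {m : ℕ} (S : Fin m → X) (i : Fin m) (s' : X) (l : ι) :
    (∑ k : Fin m, f l (S k) - m * ∫ x, f l x ∂μ) - (f l (S i) - a)
      ≤ gSDp f μ (Function.update S i s') := by
  have h1 := le_ciSup (bddAbove_deviation hmeas hrange μ (Function.update S i s')) l
  have h2 : ∑ k : Fin m, f l (Function.update S i s' k)
      = ∑ k : Fin m, f l (S k) - f l (S i) + f l s' := by
    rw [← Finset.add_sum_erase _ _ (Finset.mem_univ i),
      ← Finset.add_sum_erase (a := i) _ (fun k => f l (S k)) (Finset.mem_univ i)]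
    have : ∑ k ∈ Finset.univ.erase i, f l (Function.update S i s' k)
        = ∑ k ∈ Finset.univ.erase i, f l (S k) :=
      Finset.sum_congr rfl fun k hk => by
        rw [Function.update_of_ne (Finset.ne_of_mem_erase hk)]
    rw [this, Function.update_self]
    ring
  have h3 := (hrange l s').1
  rw [gSDp]
  rw [h2] at h1
  linarith

theorem stmt_13 {X : Type*} [MeasurableSpace X] {ι : Type*} [Countable ι]
    (f : ι → X → ℝ) (a b : ℝ) (ha : a ≤ 0) (hb : 0 < b)
    (hmeas : ∀ l : ι, Measurable (f l))
    (hrange : ∀ (l : ι) (x : X), f l x ∈ Set.Icc a b)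
    (hzero : ∃ l₀ : ι, ∀ x : X, f l₀ x = 0)
    (μ : Measure X) [IsProbabilityMeasure μ] (hc : b - a ≤ 1) (m : ℕ) :
    (∀ (S : Fin m → X) (i : Fin m),
        0 ≤ gSDp f μ S - gSDpi f μ S i ∧ gSDp f μ S - gSDpi f μ S i ≤ 1) ∧
    ∀ S : Fin m → X,
      ∑ i : Fin m, (gSDp f μ S - gSDpi f μ S i) ≤ gSDp f μ S + (m : ℝ) * etaF f μ a := by
  have : Nonempty X := nonempty_of_isProbabilityMeasure μ
  obtain ⟨l₀, hl₀⟩ := hzero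
  have : Nonempty ι := ⟨l₀⟩
  have hnonneg : ∀ T : Fin m → X, 0 ≤ gSDp f μ T := fun T => by
    have := le_ciSup (bddAbove_deviation hmeas hrange μ T) l₀
    simpa [hl₀, gSDp] using this
  have hbdd : ∀ (S : Fin m → X) (i : Fin m),
      BddBelow (Set.range fun s' : X => gSDp f μ (Function.update S i s')) := fun S i =>
    ⟨0, by rintro _ ⟨s', rfl⟩; exact hnonneg _⟩
  refine ⟨fun S i => ⟨?_, ?_⟩, fun S => ?_⟩
  · have := ciInf_le (hbdd S i) (S i)
    rw [Function.update_eq_self] at this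
    exact sub_nonneg.2 this
  · have : gSDp f μ S - 1 ≤ gSDpi f μ S i := by
      refine le_ciInf fun s' => ?_
      rw [sub_le_iff_le_add]
      refine ciSup_le fun l => ?_
      have h1 := deviation_update_le hmeas hrange μ S i s' l
      have h2 := (hrange l (S i)).2
      linarith
    linarith
  · refine le_of_forall_pos_le_add fun δ hδ => ?_
    -- A `δ / (m + 1)`-optimal function: the `m` errors then add up to at most `δ`.
    have hε : 0 < δ / ((m : ℝ) + 1) := by positivity
    obtain ⟨l, hl⟩ := exists_lt_of_lt_ciSup (show gSDp f μ S - δ / ((m : ℝ) + 1)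
      < ⨆ l : ι, (∑ k : Fin m, f l (S k) - m * ∫ x, f l x ∂μ) from sub_lt_self _ hε)
    have hterm : ∀ i : Fin m,
        gSDp f μ S - gSDpi f μ S i ≤ δ / ((m : ℝ) + 1) + (f l (S i) - a) := fun i => by
      have : (∑ k : Fin m, f l (S k) - m * ∫ x, f l x ∂μ) - (f l (S i) - a) ≤ gSDpi f μ S i :=
        le_ciInf fun s' => deviation_update_le hmeas hrange μ S i s' l
      linarith
    have hsum := Finset.sum_le_sum (s := Finset.univ) fun i _ => hterm i
    simp only [Finset.sum_add_distrib, Finset.sum_sub_distrib, Finset.sum_const,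
      Finset.card_univ, Fintype.card_fin, nsmul_eq_mul] at hsum ⊢
    have hV : ∑ k : Fin m, f l (S k) - m * ∫ x, f l x ∂μ ≤ gSDp f μ S :=
      le_ciSup (bddAbove_deviation hmeas hrange μ S) l
    have hE : (m : ℝ) * ∫ x, f l x ∂μ ≤ m * ⨆ l : ι, ∫ x, f l x ∂μ := by
      refine mul_le_mul_of_nonneg_left (le_ciSup (f := fun l : ι => ∫ x, f l x ∂μ) ⟨b, ?_⟩ l)
        m.cast_nonneg
      rintro _ ⟨l', rfl⟩
      exact (integral_mem_Icc_of_range (hmeas l') (hrange l') μ).2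
    have hδm : (m : ℝ) * (δ / ((m : ℝ) + 1)) ≤ δ := by
      rw [← mul_div_assoc, div_le_iff₀ (by positivity)]
      nlinarith
    rw [etaF, mul_sub]
    linarith
end
end

section
/- Let S = (s_1,…,s_m) be m i.i.d. samples from μ and let Z = SD⁺(F,S) = sup_{f∈F} { (1/m) Σ_{i=1}^m f(s_i) − E_μ[f] }. Then for every ε > 0, Pr_S( Z ≥ E_S[Z] + ε ) ≤ exp( − m ε² / ( 2 c ( E_S[Z] + η_F + ε/3 ) ) ). Consequently, for every δ ∈ (0,1), with probability at least 1 − δ over S, Z ≤ E_S[Z] + sqrt( ( c ln(1/δ)/(3m) )² + 2 c ln(1/δ) ( E_S[Z] + η_F ) / m ) + c ln(1/δ)/(3m). -/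
/-!
The proof is the entropy method for self-bounding functions.

Put `φ_l = (f_l - a) / c ∈ [0, 1]` and `d_l = (m / c) (sup_l' E f_l' - E f_l) ≥ 0`, and let
`W(S) = sup_l (∑_k φ_l(s_k) + d_l)`. Then `W = (m / c) (Z + η_F)`, so the claim is a tail bound
for `W`. Let `W_i` be the same supremum with the `i`-th summand left out; it is measurable
(a countable supremum) and does not depend on `s_i`. One has `0 ≤ W - W_i ≤ 1` and
`∑_i (W - W_i) ≤ W`, that is, `W` is self-bounding.

Tensorization of entropy (`entropy_tensorization`), applied to `exp (r W)` and the `exp (r W_i)`,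
yields the differential inequality `(1 - e^{-r}) L'(r) ≤ L(r)` for `L = cgf W`
(`selfBounding_entropy`). Hence `L(r) / (e^r - 1)` is nonincreasing on `(0, ∞)`; its limit at `0`
is `E W`, so `L(r) ≤ (e^r - 1) E W` (`selfBounding_cgf_le`). Chernoff's bound with
`r = t / (E W + t / 3)` and `e^r - r - 1 ≤ (r² / 2) / (1 - r / 3)` gives the Bernstein-type tail
`exp (-t² / (2 (E W + t / 3)))` (`selfBounding_tail`). The second claim solves the quadratic
equation in `ε` that makes this bound equal to `δ`.
-/

open MeasureTheory

noncomputable section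

open ProbabilityTheory Filter Topology

/-! ### Elementary inequalities and integrability -/

/-- Comparison of the exponential series with a geometric one, using `2 * 3 ^ n ≤ (n + 2)!`. -/
theorem exp_sub_le_bernstein {x : ℝ} (hx : 0 ≤ x) (hx3 : x < 3) :
    Real.exp x - x - 1 ≤ x ^ 2 / 2 * (1 - x / 3)⁻¹ := by
  have h1 : HasSum (fun n : ℕ => x ^ n / (n.factorial : ℝ)) (Real.exp x) := by
    rw [Real.exp_eq_exp_ℝ]; exact NormedSpace.expSeries_div_hasSum_exp x
  have h2 := (hasSum_nat_add_iff' 2).mpr h1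
  have h3 : HasSum (fun n : ℕ => x ^ 2 / 2 * (x / 3) ^ n) (x ^ 2 / 2 * (1 - x / 3)⁻¹) :=
    (hasSum_geometric_of_lt_one (by positivity) (by linarith)).mul_left _
  have h4 := hasSum_le (fun n => ?_) h2 h3
  · simp [Finset.sum_range_succ] at h4; linarith
  · have h5 : ((2 * 3 ^ n : ℕ) : ℝ) ≤ ((n + 2).factorial : ℝ) := by
      have := @Nat.factorial_mul_pow_le_factorial 2 n
      rw [add_comm 2 n] at this
      exact_mod_cast this
    push_cast at h5
    calc x ^ (n + 2) / ((n + 2).factorial : ℝ) ≤ x ^ (n + 2) / (2 * 3 ^ n) := by gcongr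
      _ = x ^ 2 / 2 * (x / 3) ^ n := by rw [div_pow, pow_add]; field_simp

theorem integral_pi_succ {X : Type*} [MeasurableSpace X] (μ : Measure X)
    [IsProbabilityMeasure μ] (m : ℕ) (g : (Fin (m + 1) → X) → ℝ) :
    ∫ S, g S ∂(Measure.pi fun _ : Fin (m + 1) => μ) =
      ∫ z : X × (Fin m → X), g (Fin.cons z.1 z.2)
        ∂(μ.prod (Measure.pi fun _ : Fin m => μ)) := by
  have := (measurePreserving_piFinSuccAbove (fun _ : Fin (m + 1) => μ) 0).symm.integral_comp' g
  rw [← this]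
  refine integral_congr_ae (Eventually.of_forall fun z => ?_)
  simp [MeasurableEquiv.piFinSuccAbove, Fin.insertNthEquiv]

theorem measurable_cons_prod {X : Type*} [MeasurableSpace X] (m : ℕ) :
    Measurable (fun z : X × (Fin m → X) => (Fin.cons z.1 z.2 : Fin (m + 1) → X)) :=
  measurable_pi_iff.2 fun k => Fin.cases (by simpa using measurable_fst)
    (fun j => by simpa using! (measurable_pi_apply j).comp measurable_snd) k

theorem integrable_of_bdd {Ω : Type*} [MeasurableSpace Ω] {P : Measure Ω}
    [IsFiniteMeasure P] {g : Ω → ℝ} (hg : Measurable g) (C : ℝ) (hC : ∀ ω, |g ω| ≤ C) :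
    Integrable g P :=
  Integrable.of_bound hg.aestronglyMeasurable C (Eventually.of_forall hC)

/-- The Young inequality behind the duality formula for entropy, with weights `exp v`
and `exp t`. -/
theorem young_exp (v t u : ℝ) :
    Real.exp v * u ≤ Real.exp v * (v - t - 1) + Real.exp t * Real.exp u := by
  have h := Real.add_one_le_exp (u - v + t)
  have h2 : Real.exp t * Real.exp u = Real.exp v * Real.exp (u - v + t) := by
    rw [← Real.exp_add, ← Real.exp_add]; ring_nf
  rw [h2, ← mul_add]
  exact mul_le_mul_of_nonneg_left (by linarith) (Real.exp_pos v).le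

theorem integrable_entropy_term {Ω : Type*} [MeasurableSpace Ω] {P : Measure Ω}
    [IsFiniteMeasure P] {V T : Ω → ℝ} (hV : Measurable V) (hT : Measurable T) (C : ℝ)
    (hVC : ∀ ω, |V ω| ≤ C) (hTC : ∀ ω, |T ω| ≤ C) :
    Integrable (fun ω => Real.exp (V ω) * (V ω - T ω - 1) + Real.exp (T ω)) P := by
  refine integrable_of_bdd (by fun_prop) (Real.exp C * (C + C + 1) + Real.exp C) fun ω => ?_
  have h1 := hVC ω
  have h2 := hTC ω
  refine (abs_add_le _ _).trans (add_le_add ?_ ?_)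
  · rw [abs_mul, abs_of_pos (Real.exp_pos _)]
    refine mul_le_mul (Real.exp_le_exp.2 (abs_le.1 h1).2) ?_ (abs_nonneg _) (Real.exp_pos _).le
    rw [abs_le] at *
    constructor <;> linarith
  · rw [abs_of_pos (Real.exp_pos _)]
    exact Real.exp_le_exp.2 (abs_le.1 h2).2

theorem integrable_mul_exp {Ω : Type*} [MeasurableSpace Ω] {P : Measure Ω}
    [IsFiniteMeasure P] {V : Ω → ℝ} (hV : Measurable V) (C : ℝ) (hVC : ∀ ω, |V ω| ≤ C) :
    Integrable (fun ω => V ω * Real.exp (V ω)) P := by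
  refine integrable_of_bdd (by fun_prop) (C * Real.exp C) fun ω => ?_
  rw [abs_mul, abs_of_pos (Real.exp_pos _)]
  exact mul_le_mul (hVC ω) (Real.exp_le_exp.2 (abs_le.1 (hVC ω)).2) (Real.exp_pos _).le
    ((abs_nonneg _).trans (hVC ω))

theorem integrable_exp_bdd {Ω : Type*} [MeasurableSpace Ω] {P : Measure Ω}
    [IsFiniteMeasure P] {V : Ω → ℝ} (hV : Measurable V) (C : ℝ) (hVC : ∀ ω, |V ω| ≤ C) :
    Integrable (fun ω => Real.exp (V ω)) P := by
  refine integrable_of_bdd (by fun_prop) (Real.exp C) fun ω => ?_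
  rw [abs_of_pos (Real.exp_pos _)]
  exact Real.exp_le_exp.2 (abs_le.1 (hVC ω)).2

/-! ### Tensorization of entropy -/

/-- Tensorization of entropy combined with its variational upper bound: the entropy of `exp V`
under a product measure is at most the sum over `i` of `E[e^V (V - T_i - 1) + e^{T_i}]`, for any
`T_i` not depending on the `i`-th coordinate. Induction on the number of coordinates: the
induction hypothesis handles the last `m` coordinates with the first one fixed, and the entropy of
the marginal of the first coordinate is bounded by `young_exp`. -/
theorem entropy_tensorization {X : Type*} [MeasurableSpace X] (μ : Measure X)
    [IsProbabilityMeasure μ] (C : ℝ) (m : ℕ) :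
    ∀ (V : (Fin m → X) → ℝ) (T : Fin m → (Fin m → X) → ℝ), Measurable V →
      (∀ i, Measurable (T i)) → (∀ S, |V S| ≤ C) → (∀ i S, |T i S| ≤ C) →
      (∀ i S S', (∀ k, k ≠ i → S k = S' k) → T i S = T i S') →
      ∫ S, V S * Real.exp (V S) ∂(Measure.pi fun _ : Fin m => μ) -
          (∫ S, Real.exp (V S) ∂(Measure.pi fun _ : Fin m => μ)) *
            Real.log (∫ S, Real.exp (V S) ∂(Measure.pi fun _ : Fin m => μ)) ≤
        ∑ i, ∫ S, (Real.exp (V S) * (V S - T i S - 1) + Real.exp (T i S))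
          ∂(Measure.pi fun _ : Fin m => μ) := by
  induction m with
  | zero =>
    intro V T hV hT hVC hTC hind
    rw [Measure.pi_of_empty]
    have hs : ∀ g : (Fin 0 → X) → ℝ, ∀ x, ∫ S, g S ∂(Measure.dirac x) = g x := by
      intro g x
      have : g = fun _ => g x := by
        funext y; rw [Subsingleton.elim y x]
      rw [this]; simp
    rw [hs, hs]
    simp [mul_comm]
  | succ m ih =>
    intro V T hV hT hVC hTC hind
    set P := Measure.pi fun _ : Fin m => μ with hP
    have hc := measurable_cons_prod (X := X) m
    simp only [integral_pi_succ, ← hP]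
    rw [Fin.sum_univ_succ]
    set V' : X × (Fin m → X) → ℝ := fun z => V (Fin.cons z.1 z.2) with hV'
    set T' : Fin (m + 1) → X × (Fin m → X) → ℝ := fun i z => T i (Fin.cons z.1 z.2) with hT'
    change ∫ z, V' z * Real.exp (V' z) ∂(μ.prod P) -
      (∫ z, Real.exp (V' z) ∂(μ.prod P)) * Real.log (∫ z, Real.exp (V' z) ∂(μ.prod P)) ≤
      ∫ z, (Real.exp (V' z) * (V' z - T' 0 z - 1) + Real.exp (T' 0 z)) ∂(μ.prod P) +
      ∑ i : Fin m, ∫ z, (Real.exp (V' z) * (V' z - T' i.succ z - 1) + Real.exp (T' i.succ z))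
        ∂(μ.prod P)
    have mV : Measurable V' := hV.comp hc
    have mT : ∀ i, Measurable (T' i) := fun i => (hT i).comp hc
    have bV : ∀ z, |V' z| ≤ C := fun z => hVC _
    have bT : ∀ i z, |T' i z| ≤ C := fun i z => hTC _ _
    have iE : Integrable (fun z => Real.exp (V' z)) (μ.prod P) := integrable_exp_bdd mV C bV
    have iVE : Integrable (fun z => V' z * Real.exp (V' z)) (μ.prod P) :=
      integrable_mul_exp mV C bV
    have iT : ∀ i, Integrable (fun z => Real.exp (V' z) * (V' z - T' i z - 1) +
        Real.exp (T' i z)) (μ.prod P) := fun i =>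
      integrable_entropy_term mV (mT i) C bV (bT i)
    set M : X → ℝ := fun x => ∫ s, Real.exp (V' (x, s)) ∂P with hM
    set E : ℝ := ∫ z, Real.exp (V' z) ∂(μ.prod P) with hE
    have hEM : E = ∫ x, M x ∂μ := integral_prod _ iE
    have mM : Measurable M := by
      have : StronglyMeasurable (fun z => Real.exp (V' z)) :=
        (Real.measurable_exp.comp mV).stronglyMeasurable
      exact this.integral_prod_right.measurable
    have hMlo : ∀ x, Real.exp (-C) ≤ M x := by
      intro x
      have : ∫ _s, Real.exp (-C) ∂P ≤ M x :=
        integral_mono (integrable_const _)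
          (integrable_exp_bdd (mV.comp measurable_prodMk_left) C fun _ => bV _)
          fun s => Real.exp_le_exp.2 (abs_le.1 (bV _)).1
      simpa using this
    have hMhi : ∀ x, M x ≤ Real.exp C := by
      intro x
      have : M x ≤ ∫ _s, Real.exp C ∂P :=
        integral_mono (integrable_exp_bdd (mV.comp measurable_prodMk_left) C fun _ => bV _)
          (integrable_const _)
          fun s => Real.exp_le_exp.2 (abs_le.1 (bV _)).2
      simpa using this
    have hMpos : ∀ x, 0 < M x := fun x => (Real.exp_pos _).trans_le (hMlo x)
    have iM : Integrable M μ := iE.integral_prod_left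
    have hEpos : 0 < E := by
      have : ∫ _x, Real.exp (-C) ∂μ ≤ ∫ x, M x ∂μ :=
        integral_mono (integrable_const _) iM hMlo
      rw [hEM]
      refine (Real.exp_pos (-C)).trans_le (by simpa using this)
    -- the log-density, with respect to `μ`, of the first marginal of the measure
    -- with density proportional to `exp V`
    set G : X → ℝ := fun x => Real.log (M x) - Real.log E with hG
    have mG : Measurable G := (Real.measurable_log.comp mM).sub_const _
    have hlogM : ∀ x, |Real.log (M x)| ≤ C := by
      intro x
      rw [abs_le]
      exact ⟨(Real.le_log_iff_exp_le (hMpos x)).2 (hMlo x),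
        (Real.log_le_iff_le_exp (hMpos x)).2 (hMhi x)⟩
    have bG : ∀ x, |G x| ≤ C + |Real.log E| := fun x =>
      (abs_sub _ _).trans (add_le_add (hlogM x) le_rfl)
    have hexpG : ∀ x, Real.exp (G x) = M x / E := by
      intro x
      rw [hG]; simp only
      rw [Real.exp_sub, Real.exp_log (hMpos x), Real.exp_log hEpos]
    have iEG : Integrable (fun z : X × (Fin m → X) => Real.exp (V' z) * G z.1) (μ.prod P) := by
      refine integrable_of_bdd ((Real.measurable_exp.comp mV).mul (mG.comp measurable_fst))
        (Real.exp C * (C + |Real.log E|)) fun z => ?_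
      rw [abs_mul, abs_of_pos (Real.exp_pos _)]
      exact mul_le_mul (Real.exp_le_exp.2 (abs_le.1 (bV z)).2) (bG _) (abs_nonneg _)
        (Real.exp_pos _).le
    have iMl : Integrable (fun x => M x * Real.log (M x)) μ := by
      refine integrable_of_bdd (mM.mul (Real.measurable_log.comp mM)) (Real.exp C * C) fun x => ?_
      rw [abs_mul, abs_of_pos (hMpos x)]
      exact mul_le_mul (hMhi x) (hlogM x) (abs_nonneg _) (Real.exp_pos _).le
    have hEG : ∫ z, Real.exp (V' z) * G z.1 ∂(μ.prod P) =
        ∫ x, M x * Real.log (M x) ∂μ - E * Real.log E := by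
      rw [integral_prod _ iEG]
      have : ∀ x, ∫ s, Real.exp (V' (x, s)) * G x ∂P =
          M x * Real.log (M x) - M x * Real.log E := by
        intro x
        rw [integral_mul_const]; simp only [hG]; ring
      simp only [this]
      rw [integral_sub iMl (iM.mul_const _), integral_mul_const, ← hEM]
    -- the comparison function of the first coordinate depends on the second factor only,
    -- while `exp ∘ G` is a function of the first factor with mean one
    obtain ⟨x₀⟩ : Nonempty X := nonempty_of_isProbabilityMeasure μ
    have hT0 : ∀ z, T' 0 z = T' 0 (x₀, z.2) := by
      intro z
      refine hind 0 _ _ fun k hk => ?_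
      obtain ⟨j, rfl⟩ := Fin.exists_succ_eq.2 hk
      simp
    have hGT : ∫ z, Real.exp (T' 0 z) * Real.exp (G z.1) ∂(μ.prod P) =
        ∫ z, Real.exp (T' 0 z) ∂(μ.prod P) := by
      have h1 : ∀ z, Real.exp (T' 0 z) * Real.exp (G z.1) =
          (M z.1 / E) * Real.exp (T' 0 (x₀, z.2)) := by
        intro z; rw [hexpG, ← hT0]; ring
      have h2 : ∀ z, Real.exp (T' 0 z) = 1 * Real.exp (T' 0 (x₀, z.2)) := by
        intro z; rw [← hT0, one_mul]
      rw [integral_congr_ae (Eventually.of_forall h1), integral_congr_ae (Eventually.of_forall h2),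
        integral_prod_mul (fun x => M x / E) (fun s => Real.exp (T' 0 (x₀, s))),
        integral_prod_mul (fun _ : X => (1 : ℝ)) (fun s => Real.exp (T' 0 (x₀, s))),
        integral_div, ← hEM, div_self hEpos.ne']
      simp
    have iET : Integrable (fun z => Real.exp (T' 0 z)) (μ.prod P) :=
      integrable_exp_bdd (mT 0) C (bT 0)
    have iETG : Integrable (fun z : X × (Fin m → X) => Real.exp (T' 0 z) * Real.exp (G z.1))
        (μ.prod P) := by
      simp only [← Real.exp_add]
      exact integrable_exp_bdd ((mT 0).add (mG.comp measurable_fst)) (C + (C + |Real.log E|))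
        fun z => (abs_add_le _ _).trans (add_le_add (bT 0 z) (bG _))
    have iD : Integrable (fun z => Real.exp (V' z) * (V' z - T' 0 z - 1)) (μ.prod P) := by
      refine ((iT 0).sub iET).congr (Eventually.of_forall fun z => ?_)
      simp
    have step1 : ∫ x, M x * Real.log (M x) ∂μ - E * Real.log E ≤
        ∫ z, (Real.exp (V' z) * (V' z - T' 0 z - 1) + Real.exp (T' 0 z)) ∂(μ.prod P) := by
      rw [← hEG, integral_add iD iET, ← hGT, ← integral_add iD iETG]
      exact integral_mono iEG (iD.add iETG) fun z => young_exp _ _ _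
    have step2 : ∫ z, V' z * Real.exp (V' z) ∂(μ.prod P) - ∫ x, M x * Real.log (M x) ∂μ ≤
        ∑ i : Fin m, ∫ z, (Real.exp (V' z) * (V' z - T' i.succ z - 1) +
          Real.exp (T' i.succ z)) ∂(μ.prod P) := by
      rw [integral_prod _ iVE]
      simp only [fun i : Fin m => integral_prod _ (iT i.succ)]
      rw [← integral_finsetSum _ fun i _ => (iT i.succ).integral_prod_left,
        ← integral_sub iVE.integral_prod_left iMl]
      refine integral_mono (iVE.integral_prod_left.sub iMl)
        (integrable_finsetSum _ fun i _ => (iT i.succ).integral_prod_left) fun x => ?_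
      refine ih (fun s => V' (x, s)) (fun i s => T' i.succ (x, s))
        (mV.comp measurable_prodMk_left) (fun i => (mT _).comp measurable_prodMk_left)
        (fun s => bV _) (fun i s => bT _ _) fun i s s' h => hind _ _ _ fun k hk => ?_
      induction k using Fin.cases with
      | zero => simp
      | succ j => simpa using h j fun h => hk (by rw [h])
    linarith
/-! ### Concentration of self-bounding functions -/

/-- Convexity of `s ↦ e^{-s} + s - 1`, which vanishes at `0`, along the segment from `0`
to `r`. -/
theorem exp_neg_mul_le {r x : ℝ} (hx0 : 0 ≤ x) (hx1 : x ≤ 1) :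
    Real.exp (-(r * x)) + r * x - 1 ≤ x * (Real.exp (-r) + r - 1) := by
  have h := convexOn_exp.2 (Set.mem_univ (-r)) (Set.mem_univ 0) hx0
    (sub_nonneg.2 hx1) (by ring)
  simp only [smul_eq_mul, mul_zero, add_zero, Real.exp_zero, mul_one] at h
  rw [show x * -r = -(r * x) by ring] at h
  linarith

/-- The differential inequality `(1 - e^{-r}) F'(r) ≤ F(r) log F(r)` for the moment generating
function `F` of a self-bounding `W`, where `F'(r) = E[W e^{rW}]`. -/
theorem selfBounding_entropy {X : Type*} [MeasurableSpace X] (μ : Measure X)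
    [IsProbabilityMeasure μ] {C : ℝ} {m : ℕ} {W : (Fin m → X) → ℝ}
    {T : Fin m → (Fin m → X) → ℝ} (hW : Measurable W) (hT : ∀ i, Measurable (T i))
    (hWC : ∀ S, |W S| ≤ C) (hTC : ∀ i S, |T i S| ≤ C)
    (hind : ∀ i S S', (∀ k, k ≠ i → S k = S' k) → T i S = T i S')
    (hle : ∀ i S, T i S ≤ W S) (hle1 : ∀ i S, W S ≤ T i S + 1)
    (hsum : ∀ S, ∑ i, (W S - T i S) ≤ W S) {r : ℝ} (hr : 0 < r) :
    (1 - Real.exp (-r)) * ∫ S, W S * Real.exp (r * W S) ∂(Measure.pi fun _ : Fin m => μ) ≤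
      mgf W (Measure.pi fun _ : Fin m => μ) r * cgf W (Measure.pi fun _ : Fin m => μ) r := by
  set P := Measure.pi fun _ : Fin m => μ with hP
  have hC : ∀ x : ℝ, |x| ≤ C → |r * x| ≤ r * C := fun x hx => by
    rw [abs_mul, abs_of_pos hr]; exact mul_le_mul_of_nonneg_left hx hr.le
  have mW := hW.const_mul r
  have mT := fun i => (hT i).const_mul r
  have h := entropy_tensorization μ (r * C) m (fun S => r * W S) (fun i S => r * T i S)
    mW mT (fun S => hC _ (hWC S)) (fun i S => hC _ (hTC i S))
    (fun i S S' hS => by rw [hind i S S' hS])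
  rw [← hP] at h
  have iT : ∀ i, Integrable (fun S => Real.exp (r * W S) * (r * W S - r * T i S - 1) +
      Real.exp (r * T i S)) P := fun i =>
    integrable_entropy_term mW (mT i) (r * C) (fun S => hC _ (hWC S)) (fun S => hC _ (hTC i S))
  have iW : Integrable (fun S => W S * Real.exp (r * W S)) P := by
    have := (integrable_mul_exp (P := P) mW (r * C) (fun S => hC _ (hWC S))).const_mul r⁻¹
    refine this.congr (Eventually.of_forall fun S => ?_)
    simp only
    field_simp
  have hphi : 0 ≤ Real.exp (-r) + r - 1 := by linarith [Real.add_one_le_exp (-r)]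
  have h2 : ∑ i, ∫ S, (Real.exp (r * W S) * (r * W S - r * T i S - 1) +
      Real.exp (r * T i S)) ∂P ≤
      (Real.exp (-r) + r - 1) * ∫ S, W S * Real.exp (r * W S) ∂P := by
    rw [← integral_finsetSum _ fun i _ => iT i, ← integral_const_mul]
    refine integral_mono (integrable_finsetSum _ fun i _ => iT i) (iW.const_mul _) fun S => ?_
    have h3 : ∀ i, Real.exp (r * W S) * (r * W S - r * T i S - 1) + Real.exp (r * T i S) ≤
        Real.exp (r * W S) * ((W S - T i S) * (Real.exp (-r) + r - 1)) := by
      intro i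
      have h4 : Real.exp (r * T i S) = Real.exp (r * W S) * Real.exp (-(r * (W S - T i S))) := by
        rw [← Real.exp_add]; ring_nf
      rw [h4, ← mul_add]
      refine mul_le_mul_of_nonneg_left ?_ (Real.exp_pos _).le
      have := exp_neg_mul_le (r := r) (x := W S - T i S) (by linarith [hle i S])
        (by linarith [hle1 i S])
      linarith
    calc ∑ i, (Real.exp (r * W S) * (r * W S - r * T i S - 1) + Real.exp (r * T i S))
        ≤ ∑ i, Real.exp (r * W S) * ((W S - T i S) * (Real.exp (-r) + r - 1)) :=
          Finset.sum_le_sum fun i _ => h3 i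
      _ = (Real.exp (-r) + r - 1) * Real.exp (r * W S) * ∑ i, (W S - T i S) := by
          rw [Finset.mul_sum]; exact Finset.sum_congr rfl fun i _ => by ring
      _ ≤ (Real.exp (-r) + r - 1) * Real.exp (r * W S) * W S :=
          mul_le_mul_of_nonneg_left (hsum S) (mul_nonneg hphi (Real.exp_pos _).le)
      _ = (Real.exp (-r) + r - 1) * (W S * Real.exp (r * W S)) := by ring
  have h5 : ∫ S, r * W S * Real.exp (r * W S) ∂P = r * ∫ S, W S * Real.exp (r * W S) ∂P := by
    rw [← integral_const_mul]; simp only [mul_assoc]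
  rw [h5] at h
  have h6 := h.trans h2
  simp only [cgf, mgf]
  linarith

/-- The cumulant generating function of a self-bounding `W` is at most that of a Poisson variable
with the same mean. -/
theorem selfBounding_cgf_le {X : Type*} [MeasurableSpace X] (μ : Measure X)
    [IsProbabilityMeasure μ] {C : ℝ} {m : ℕ} {W : (Fin m → X) → ℝ}
    {T : Fin m → (Fin m → X) → ℝ} (hW : Measurable W) (hT : ∀ i, Measurable (T i))
    (hWC : ∀ S, |W S| ≤ C) (hTC : ∀ i S, |T i S| ≤ C)
    (hind : ∀ i S S', (∀ k, k ≠ i → S k = S' k) → T i S = T i S')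
    (hle : ∀ i S, T i S ≤ W S) (hle1 : ∀ i S, W S ≤ T i S + 1)
    (hsum : ∀ S, ∑ i, (W S - T i S) ≤ W S) {r : ℝ} (hr : 0 < r) :
    cgf W (Measure.pi fun _ : Fin m => μ) r ≤
      (Real.exp r - 1) * ∫ S, W S ∂(Measure.pi fun _ : Fin m => μ) := by
  set P := Measure.pi fun _ : Fin m => μ with hP
  have hint : ∀ t : ℝ, Integrable (fun S => Real.exp (t * W S)) P := fun t =>
    integrable_exp_mul_of_mem_Icc hW.aemeasurable
      (Eventually.of_forall fun S => abs_le.1 (hWC S))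
  have hset : integrableExpSet W P = Set.univ := Set.eq_univ_of_forall hint
  have hmem : ∀ t, t ∈ interior (integrableExpSet W P) := by simp [hset]
  have hdc : ∀ t, HasDerivAt (cgf W P)
      ((∫ S, W S * Real.exp (t * W S) ∂P) / mgf W P t) t := by
    intro t
    have := (analyticAt_cgf (hmem t)).differentiableAt.hasDerivAt
    rwa [deriv_cgf (hmem t)] at this
  have hpos : ∀ t : ℝ, 0 < t → 0 < Real.exp t - 1 := fun t ht => by
    linarith [Real.add_one_lt_exp ht.ne']
  have hq : ∀ t : ℝ, 0 < t → HasDerivAt (fun t => cgf W P t / (Real.exp t - 1))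
      (((∫ S, W S * Real.exp (t * W S) ∂P) / mgf W P t * (Real.exp t - 1) -
        cgf W P t * Real.exp t) / (Real.exp t - 1) ^ 2) t := fun t ht =>
    (hdc t).div ((Real.hasDerivAt_exp t).sub_const 1) (hpos t ht).ne'
  have hanti : AntitoneOn (fun t => cgf W P t / (Real.exp t - 1)) (Set.Ioi 0) := by
    refine antitoneOn_of_deriv_nonpos (convex_Ioi 0)
      (fun t ht => (hq t ht).continuousAt.continuousWithinAt) ?_ ?_
    · rw [interior_Ioi]
      exact fun t ht => (hq t ht).differentiableAt.differentiableWithinAt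
    · rw [interior_Ioi]
      intro t ht
      rw [(hq t ht).deriv]
      refine div_nonpos_of_nonpos_of_nonneg ?_ (sq_nonneg _)
      have h1 := selfBounding_entropy μ hW hT hWC hTC hind hle hle1 hsum (r := t) ht
      rw [← hP] at h1
      have hm : 0 < mgf W P t := mgf_pos (hint t)
      have h2 : (1 - Real.exp (-t)) * ((∫ S, W S * Real.exp (t * W S) ∂P) / mgf W P t) ≤
          cgf W P t := by
        rw [← mul_div_assoc, div_le_iff₀ hm]; linarith
      have h3 := mul_le_mul_of_nonneg_right h2 (Real.exp_pos t).le
      have h4 : Real.exp (-t) * Real.exp t = 1 := by rw [← Real.exp_add]; simp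
      linear_combination h3 + h4 * ((∫ S, W S * Real.exp (t * W S) ∂P) / mgf W P t)
  have hlim : Tendsto (fun t => cgf W P t / (Real.exp t - 1)) (𝓝[>] 0) (𝓝 (∫ S, W S ∂P)) := by
    have h1 := (hdc 0).tendsto_slope_zero_right
    have h2 := (Real.hasDerivAt_exp 0).tendsto_slope_zero_right
    have h3 := h1.div h2 (by simp)
    simp only [zero_add, cgf_zero, Real.exp_zero, zero_mul, mul_one, mgf_zero, div_one,
      sub_zero, smul_eq_mul] at h3
    refine h3.congr' ?_
    filter_upwards [self_mem_nhdsWithin] with t ht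
    have : t ≠ 0 := (Set.mem_Ioi.1 ht).ne'
    simp only [Pi.div_apply]
    rw [mul_div_mul_left _ _ (inv_ne_zero this)]
  have hfin : cgf W P r / (Real.exp r - 1) ≤ ∫ S, W S ∂P := by
    refine ge_of_tendsto hlim ?_
    filter_upwards [Ioo_mem_nhdsGT hr] with t ht
    exact hanti ht.1 hr ht.2.le
  rw [div_le_iff₀ (hpos r hr)] at hfin
  linarith

theorem selfBounding_tail {X : Type*} [MeasurableSpace X] (μ : Measure X)
    [IsProbabilityMeasure μ] {C : ℝ} {m : ℕ} {W : (Fin m → X) → ℝ}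
    {T : Fin m → (Fin m → X) → ℝ} (hW : Measurable W) (hT : ∀ i, Measurable (T i))
    (hWC : ∀ S, |W S| ≤ C) (hTC : ∀ i S, |T i S| ≤ C)
    (hind : ∀ i S S', (∀ k, k ≠ i → S k = S' k) → T i S = T i S')
    (hle : ∀ i S, T i S ≤ W S) (hle1 : ∀ i S, W S ≤ T i S + 1)
    (hsum : ∀ S, ∑ i, (W S - T i S) ≤ W S) {v : ℝ}
    (hv : v = ∫ S, W S ∂(Measure.pi fun _ : Fin m => μ)) {t : ℝ} (ht : 0 < t) :
    (Measure.pi fun _ : Fin m => μ).real {S | v + t ≤ W S} ≤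
      Real.exp (-t ^ 2 / (2 * (v + t / 3))) := by
  have hv0 : 0 ≤ v := by
    rw [hv]
    exact integral_nonneg fun S =>
      (Finset.sum_nonneg fun i _ => sub_nonneg.2 (hle i S)).trans (hsum S)
  have hden : 0 < v + t / 3 := by linarith
  set r := t / (v + t / 3) with hr
  have hr0 : 0 < r := div_pos ht hden
  have h1 := measure_ge_le_exp_cgf (X := W) (μ := Measure.pi fun _ : Fin m => μ) (v + t) hr0.le
    (integrable_exp_mul_of_mem_Icc hW.aemeasurable
      (Eventually.of_forall fun S => abs_le.1 (hWC S)))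
  have h2 := selfBounding_cgf_le μ hW hT hWC hTC hind hle hle1 hsum hr0
  rw [← hv] at h2
  refine h1.trans (Real.exp_le_exp.2 ?_)
  -- for `v = 0` one has `r = 3`, outside the range of `exp_sub_le_bernstein`
  have h3 : (Real.exp r - r - 1) * v ≤ r ^ 2 / 2 * (v + t / 3) := by
    rcases hv0.eq_or_lt with h | h
    · rw [← h, mul_zero]; positivity
    · have hlt : r < 3 := by rw [hr, div_lt_iff₀ hden]; linarith
      have h4 := mul_le_mul_of_nonneg_right (exp_sub_le_bernstein hr0.le hlt) hv0
      have h5 : (1 - r / 3)⁻¹ * v = v + t / 3 := by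
        have : 1 - r / 3 = v / (v + t / 3) := by rw [hr]; field_simp; ring
        rw [this, inv_div]; field_simp
      rwa [mul_assoc, h5] at h4
  have h6 : r ^ 2 / 2 * (v + t / 3) - r * t = -t ^ 2 / (2 * (v + t / 3)) := by
    rw [hr]; field_simp; ring
  rw [← h6]
  linarith

/-! ### Suprema of sums and the supremum deviation -/

/-- Suprema of nonnegatively shifted sums of `[0, 1]`-valued functions are self-bounding; the
comparison functions leave out one summand. -/
theorem sup_tail {X ι : Type*} [MeasurableSpace X] [Countable ι] [Nonempty ι] (μ : Measure X)
    [IsProbabilityMeasure μ] {m : ℕ} (hm : 0 < m) (φ : ι → X → ℝ) (d : ι → ℝ) (D : ℝ)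
    (hφ : ∀ l, Measurable (φ l)) (h0 : ∀ l x, 0 ≤ φ l x) (h1 : ∀ l x, φ l x ≤ 1)
    (hd0 : ∀ l, 0 ≤ d l) (hdD : ∀ l, d l ≤ D) {v : ℝ}
    (hv : v = ∫ S : Fin m → X, ⨆ l, (∑ k, φ l (S k) + d l) ∂(Measure.pi fun _ : Fin m => μ))
    {t : ℝ} (ht : 0 < t) :
    (Measure.pi fun _ : Fin m => μ).real {S | v + t ≤ ⨆ l, (∑ k, φ l (S k) + d l)} ≤
      Real.exp (-t ^ 2 / (2 * (v + t / 3))) := by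
  have key : ∀ (s : Finset (Fin m)) (l : ι) (S : Fin m → X),
      0 ≤ ∑ k ∈ s, φ l (S k) + d l ∧ ∑ k ∈ s, φ l (S k) + d l ≤ m + D := by
    intro s l S
    refine ⟨add_nonneg (Finset.sum_nonneg fun k _ => h0 l _) (hd0 l), add_le_add ?_ (hdD l)⟩
    calc ∑ k ∈ s, φ l (S k) ≤ ∑ k ∈ s, (1 : ℝ) := Finset.sum_le_sum fun k _ => h1 l _
      _ = s.card := by simp
      _ ≤ m := by exact_mod_cast (Finset.card_le_univ s).trans (by simp)
  have bdd : ∀ (s : Finset (Fin m)) (S : Fin m → X),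
      BddAbove (Set.range fun l => ∑ k ∈ s, φ l (S k) + d l) := fun s S =>
    ⟨m + D, by rintro _ ⟨l, rfl⟩; exact (key s l S).2⟩
  have hmeas : ∀ s : Finset (Fin m),
      Measurable fun S : Fin m → X => ⨆ l, (∑ k ∈ s, φ l (S k) + d l) := fun s =>
    Measurable.iSup fun l => (Finset.measurable_sum s fun k _ =>
      (hφ l).comp (measurable_pi_apply k)).add_const _
  have habs : ∀ (s : Finset (Fin m)) (S : Fin m → X),
      |⨆ l, (∑ k ∈ s, φ l (S k) + d l)| ≤ m + D := fun s S => by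
    rw [abs_of_nonneg (Real.iSup_nonneg fun l => (key s l S).1)]
    exact ciSup_le fun l => (key s l S).2
  have hsplit : ∀ (i : Fin m) (l : ι) (S : Fin m → X),
      φ l (S i) + ∑ k ∈ Finset.univ.erase i, φ l (S k) = ∑ k, φ l (S k) := fun i l S =>
    Finset.add_sum_erase _ (fun k => φ l (S k)) (Finset.mem_univ i)
  refine selfBounding_tail μ (C := m + D)
    (T := fun i S => ⨆ l, (∑ k ∈ Finset.univ.erase i, φ l (S k) + d l))
    (hmeas _) (fun i => hmeas _) (habs _) (fun i => habs _) ?_ ?_ ?_ ?_ hv ht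
  · intro i S S' h
    have : ∀ l, ∑ k ∈ Finset.univ.erase i, φ l (S k) = ∑ k ∈ Finset.univ.erase i, φ l (S' k) :=
      fun l => Finset.sum_congr rfl fun k hk => by rw [h k (Finset.ne_of_mem_erase hk)]
    simp only [this]
  · intro i S
    refine ciSup_mono (bdd _ S) fun l => ?_
    linarith [hsplit i l S, h0 l (S i)]
  · intro i S
    refine ciSup_le fun l => ?_
    linarith [hsplit i l S, h1 l (S i), le_ciSup (bdd (Finset.univ.erase i) S) l]
  · intro S
    set W := ⨆ l, (∑ k, φ l (S k) + d l) with hW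
    set R := ∑ i : Fin m, ⨆ l, (∑ k ∈ Finset.univ.erase i, φ l (S k) + d l) with hR
    have hm' : (0 : ℝ) < m := by exact_mod_cast hm
    -- each `val_l` in the supremum satisfies `m * val_l ≤ ∑ i, (val_l - φ l (S i)) + val_l ≤ R + W`
    have h : W ≤ (R + W) / m := by
      refine ciSup_le fun l => ?_
      rw [le_div_iff₀ hm']
      have e1 : ∑ i : Fin m, (∑ k, φ l (S k) + d l - φ l (S i)) ≤ R :=
        Finset.sum_le_sum fun i _ => by
          linarith [hsplit i l S, le_ciSup (bdd (Finset.univ.erase i) S) l]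
      rw [Finset.sum_sub_distrib, Finset.sum_const, Finset.card_univ, Fintype.card_fin,
        nsmul_eq_mul] at e1
      have e2 : ∑ k, φ l (S k) + d l ≤ W := le_ciSup (bdd Finset.univ S) l
      linarith [hd0 l]
    rw [le_div_iff₀ hm'] at h
    rw [Finset.sum_sub_distrib, Finset.sum_const, Finset.card_univ, Fintype.card_fin,
      nsmul_eq_mul]
    linarith

/-- The tail bound for `sdPlus`, by rescaling it to `(m / (b - a)) (sdPlus + η_F)` and applying
`sup_tail`. -/
theorem sdPlus_tail {X : Type*} [MeasurableSpace X] {ι : Type*} [Countable ι] [Nonempty ι]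
    (f : ι → X → ℝ) {a b : ℝ} (hab : a < b)
    (hmeas : ∀ l : ι, Measurable (f l))
    (hrange : ∀ (l : ι) (x : X), f l x ∈ Set.Icc a b)
    (μ : Measure X) [IsProbabilityMeasure μ] {m : ℕ} (hm : 0 < m)
    {EZ : ℝ} (hEZ : EZ = ∫ S : Fin m → X, sdPlus f μ S ∂(Measure.pi fun _ : Fin m => μ))
    {ε : ℝ} (hε : 0 < ε) :
    ((Measure.pi fun _ : Fin m => μ) {S : Fin m → X | sdPlus f μ S ≥ EZ + ε}).toReal ≤
      Real.exp (-((m : ℝ) * ε ^ 2) / (2 * (b - a) * (EZ + etaF f μ a + ε / 3))) := by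
  have hm' : (0 : ℝ) < m := by exact_mod_cast hm
  have hc : 0 < b - a := sub_pos.2 hab
  have hmean : ∀ l, ∫ x, f l x ∂μ ∈ Set.Icc a b := by
    intro l
    have hi : Integrable (f l) μ := Integrable.of_mem_Icc a b (hmeas l).aemeasurable
      (Eventually.of_forall (hrange l))
    have e1 : ∫ _x, a ∂μ ≤ ∫ x, f l x ∂μ :=
      integral_mono (integrable_const _) hi fun x => (hrange l x).1
    have e2 : ∫ x, f l x ∂μ ≤ ∫ _x, b ∂μ :=
      integral_mono hi (integrable_const _) fun x => (hrange l x).2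
    exact ⟨by simpa using e1, by simpa using e2⟩
  set N := ⨆ l : ι, ∫ x, f l x ∂μ with hN
  have hNle : ∀ l, ∫ x, f l x ∂μ ≤ N := fun l =>
    le_ciSup (f := fun l => ∫ x, f l x ∂μ)
      ⟨b, by rintro _ ⟨l, rfl⟩; exact (hmean l).2⟩ l
  have hNb : N ≤ b := ciSup_le fun l => (hmean l).2
  have heta : etaF f μ a = N - a := rfl
  set φ : ι → X → ℝ := fun l x => (f l x - a) / (b - a) with hφ
  set d : ι → ℝ := fun l => m / (b - a) * (N - ∫ x, f l x ∂μ) with hd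
  have hφ0 : ∀ l x, 0 ≤ φ l x := fun l x => div_nonneg (sub_nonneg.2 (hrange l x).1) hc.le
  have hφ1 : ∀ l x, φ l x ≤ 1 := fun l x =>
    (div_le_one hc).2 (sub_le_sub_right (hrange l x).2 a)
  have hd0 : ∀ l, 0 ≤ d l := fun l =>
    mul_nonneg (by positivity) (sub_nonneg.2 (hNle l))
  have hdm : ∀ l, d l ≤ m / (b - a) * (b - a) := fun l =>
    mul_le_mul_of_nonneg_left (by linarith [(hmean l).1]) (by positivity)
  have hval : ∀ (S : Fin m → X) l, ∑ k, φ l (S k) + d l =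
      m / (b - a) * ((m : ℝ)⁻¹ * ∑ k, f l (S k) - ∫ x, f l x ∂μ) + m / (b - a) * (N - a) := by
    intro S l
    simp only [hφ, hd]
    rw [← Finset.sum_div, Finset.sum_sub_distrib, Finset.sum_const, Finset.card_univ,
      Fintype.card_fin, nsmul_eq_mul]
    field_simp
    ring
  have hsup : ∀ S : Fin m → X, ⨆ l, (∑ k, φ l (S k) + d l) =
      m / (b - a) * sdPlus f μ S + m / (b - a) * (N - a) := by
    intro S
    have hbdd : BddAbove (Set.range fun l =>
        m / (b - a) * ((m : ℝ)⁻¹ * ∑ k, f l (S k) - ∫ x, f l x ∂μ)) := by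
      refine ⟨m + m / (b - a) * (b - a) - m / (b - a) * (N - a), ?_⟩
      rintro _ ⟨l, rfl⟩
      have e1 : ∑ k, φ l (S k) ≤ m := by
        simpa using Finset.sum_le_sum fun k (_ : k ∈ Finset.univ) => hφ1 l (S k)
      simp only
      linarith [hval S l, hdm l]
    simp only [hval]
    rw [← ciSup_add hbdd, sdPlus, Real.mul_iSup_of_nonneg (by positivity)]
  have hint : Integrable (sdPlus f μ) (Measure.pi fun _ : Fin m => μ) := by
    have hmZ : Measurable (sdPlus f μ (m := m)) := by
      unfold sdPlus
      exact Measurable.iSup fun l => ((Finset.measurable_sum _ fun k _ =>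
        (hmeas l).comp (measurable_pi_apply k)).const_mul _).sub_const _
    have hle : ∀ S : Fin m → X, ∀ l,
        |(m : ℝ)⁻¹ * ∑ k : Fin m, f l (S k) - ∫ x, f l x ∂μ| ≤ b - a := by
      intro S l
      have e1 : ∑ k : Fin m, f l (S k) ≤ m * b := by
        simpa using Finset.sum_le_sum fun k (_ : k ∈ Finset.univ) => (hrange l (S k)).2
      have e2 : m * a ≤ ∑ k : Fin m, f l (S k) := by
        simpa using Finset.sum_le_sum fun k (_ : k ∈ Finset.univ) => (hrange l (S k)).1
      have e3 : (m : ℝ)⁻¹ * ∑ k : Fin m, f l (S k) ≤ b := by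
        rw [inv_mul_le_iff₀ hm']; exact e1
      have e4 : a ≤ (m : ℝ)⁻¹ * ∑ k : Fin m, f l (S k) := by
        rw [le_inv_mul_iff₀ hm']; exact e2
      rw [abs_le]
      constructor <;> linarith [(hmean l).1, (hmean l).2]
    refine integrable_of_bdd hmZ (b - a) fun S => abs_le.2 ⟨?_, ?_⟩
    · obtain ⟨l⟩ := ‹Nonempty ι›
      refine (abs_le.1 (hle S l)).1.trans (le_ciSup (f := fun l =>
        (m : ℝ)⁻¹ * ∑ k : Fin m, f l (S k) - ∫ x, f l x ∂μ) ⟨b - a, ?_⟩ l)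
      rintro _ ⟨l, rfl⟩
      exact (abs_le.1 (hle S l)).2
    · exact ciSup_le fun l => (abs_le.1 (hle S l)).2
  have hv : m / (b - a) * (EZ + (N - a)) =
      ∫ S : Fin m → X, ⨆ l, (∑ k, φ l (S k) + d l) ∂(Measure.pi fun _ : Fin m => μ) := by
    simp only [hsup]
    rw [integral_add (hint.const_mul _) (integrable_const _), integral_const_mul, ← hEZ]
    simp
    ring
  have main := sup_tail μ hm φ d _ (fun l => ((hmeas l).sub_const a).div_const _) hφ0 hφ1 hd0
    hdm hv (t := m / (b - a) * ε) (by positivity)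
  have hset : {S : Fin m → X | sdPlus f μ S ≥ EZ + ε} =
      {S | m / (b - a) * (EZ + (N - a)) + m / (b - a) * ε ≤
        ⨆ l, (∑ k, φ l (S k) + d l)} := by
    ext S
    simp only [Set.mem_ofPred_eq, hsup, ge_iff_le]
    rw [← mul_add, ← mul_add, mul_le_mul_iff_of_pos_left (by positivity)]
    constructor <;> intro h <;> linarith
  rw [hset, heta]
  refine main.trans (le_of_eq ?_)
  congr 1
  have hk : 0 < (m : ℝ) / (b - a) := by positivity
  rw [show 2 * (m / (b - a) * (EZ + (N - a)) + m / (b - a) * ε / 3) =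
      m / (b - a) * (2 * (EZ + (N - a) + ε / 3)) by ring,
    show -(m / (b - a) * ε) ^ 2 = m / (b - a) * (-(m / (b - a) * ε ^ 2)) by ring,
    mul_div_mul_left _ _ hk.ne', show -(m / (b - a) * ε ^ 2) = -(m * ε ^ 2) / (b - a) by ring,
    div_div]
  ring_nf

theorem stmt_15 {X : Type*} [MeasurableSpace X] {ι : Type*} [Countable ι]
    (f : ι → X → ℝ) (a b : ℝ) (ha : a ≤ 0) (hb : 0 < b)
    (hmeas : ∀ l : ι, Measurable (f l))
    (hrange : ∀ (l : ι) (x : X), f l x ∈ Set.Icc a b)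
    (hzero : ∃ l₀ : ι, ∀ x : X, f l₀ x = 0)
    (μ : Measure X) [IsProbabilityMeasure μ] (m : ℕ) (hm : 0 < m)
    (EZ : ℝ) (hEZ : EZ = ∫ S : Fin m → X, sdPlus f μ S ∂(Measure.pi fun _ : Fin m => μ)) :
    (∀ ε : ℝ, 0 < ε →
      ((Measure.pi fun _ : Fin m => μ)
          {S : Fin m → X | sdPlus f μ S ≥ EZ + ε}).toReal ≤
        Real.exp (-((m : ℝ) * ε ^ 2) / (2 * (b - a) * (EZ + etaF f μ a + ε / 3)))) ∧
    ∀ δ : ℝ, δ ∈ Set.Ioo (0 : ℝ) 1 →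
      1 - δ ≤ ((Measure.pi fun _ : Fin m => μ)
        {S : Fin m → X | sdPlus f μ S ≤ EZ +
          Real.sqrt (((b - a) * Real.log (1 / δ) / (3 * m)) ^ 2 +
            2 * (b - a) * Real.log (1 / δ) * (EZ + etaF f μ a) / m) +
          (b - a) * Real.log (1 / δ) / (3 * m)}).toReal := by
  obtain ⟨l₀, hl₀⟩ := hzero
  have : Nonempty ι := ⟨l₀⟩
  have hab : a < b := ha.trans_lt hb
  have hc : 0 < b - a := sub_pos.2 hab
  have hm' : (0 : ℝ) < m := by exact_mod_cast hm
  have hmain : ∀ ε : ℝ, 0 < ε → ((Measure.pi fun _ : Fin m => μ)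
      {S : Fin m → X | sdPlus f μ S ≥ EZ + ε}).toReal ≤
      Real.exp (-((m : ℝ) * ε ^ 2) / (2 * (b - a) * (EZ + etaF f μ a + ε / 3))) :=
    fun ε hε => sdPlus_tail f hab hmeas hrange μ hm hEZ hε
  refine ⟨hmain, fun δ hδ => ?_⟩
  have hnn : 0 ≤ EZ + etaF f μ a := by
    have h1 : 0 ≤ EZ := by
      rw [hEZ]
      exact integral_nonneg fun S => Real.iSup_nonneg' ⟨l₀, by simp [hl₀]⟩
    have h2 : 0 ≤ ⨆ l : ι, ∫ x, f l x ∂μ := Real.iSup_nonneg' ⟨l₀, by simp [hl₀]⟩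
    rw [etaF]
    linarith
  have hL : 0 < Real.log (1 / δ) := Real.log_pos (by rw [lt_div_iff₀ hδ.1]; linarith [hδ.2])
  set L := Real.log (1 / δ) with hLdef
  set A := (b - a) * L / (3 * m) with hA
  set B := 2 * (b - a) * L * (EZ + etaF f μ a) / m with hB
  have hApos : 0 < A := by positivity
  have hBnn : 0 ≤ B := by positivity
  set ε := Real.sqrt (A ^ 2 + B) + A with hε
  have hεpos : 0 < ε := by positivity
  -- `ε` is the positive root of `ε² = 2 A ε + B`
  have hroot : ε ^ 2 = 2 * A * ε + B := by
    have h := Real.sq_sqrt (show 0 ≤ A ^ 2 + B by positivity)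
    rw [hε]; linear_combination h
  have hexp : Real.exp (-((m : ℝ) * ε ^ 2) / (2 * (b - a) * (EZ + etaF f μ a + ε / 3))) = δ := by
    have h1 : -((m : ℝ) * ε ^ 2) / (2 * (b - a) * (EZ + etaF f μ a + ε / 3)) = -L := by
      rw [div_eq_iff (by positivity), hroot, hA, hB]
      field_simp
      ring
    rw [h1, hLdef, one_div, Real.log_inv, neg_neg, Real.exp_log hδ.1]
  have htail := (hmain ε hεpos).trans_eq hexp
  rw [add_assoc]
  have hcover : (Set.univ : Set (Fin m → X)) ⊆
      {S | sdPlus f μ S ≤ EZ + ε} ∪ {S | sdPlus f μ S ≥ EZ + ε} := fun S _ =>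
    le_total (sdPlus f μ S) (EZ + ε)
  have hprob : (1 : ℝ) ≤ (Measure.pi fun _ : Fin m => μ).real {S | sdPlus f μ S ≤ EZ + ε} +
      (Measure.pi fun _ : Fin m => μ).real {S | sdPlus f μ S ≥ EZ + ε} := by
    refine le_trans ?_ (measureReal_union_le _ _)
    have := measureReal_mono (μ := Measure.pi fun _ : Fin m => μ) hcover
    simpa using this
  simp only [Measure.real] at hprob
  linarith
end
end
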